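/- arXiv:1908.00899 — 2 statements merged into one kernel-verified Lean document; each statement's English description precedes it below -/
import Mathlib

section
/- Let X be an irreducible subvariety of a product of projective spaces P^{n_1} × ... × P^{n_k}, and let I = {i_1,...,i_s} be a subset of {1,...,k}. If e = (e_1,...,e_k) is a multidimension vector for X (i.e., the intersection of X with a general product of linear subspaces of codimensions e_1,...,e_k is finite and nonempty), then e_{i_1} + ... + e_{i_s} ≤ dim π_I(X), where π_I is the projection onto the factors indexed by I. -/
/-!
Write `Y = π_I(X)`. The number `dim Y` is the largest `∑ f` over the multidimensions `f` of `Y`,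
so it is enough to find a multidimension `f` of `Y` with `∑_{i ∈ I} e i ≤ ∑ f`. Call a type `f`
on the factors in `I` *good* if every slice of type `f` meets `Y`.

* The restriction `e|_I` is good (`forall_nonempty_of_mDim`): if one slice of that type missed
  `Y`, then so would a dense open set of slices, hence the general slice of `X` of type `e`
  would be empty.
* A good `f` with `∑ f` maximal is a multidimension of `Y` (`mem_mDim_of_maximal`). By maximality,
  for each `i ∈ I` some slice of type `f + δ_i` is empty, hence a general one is. So for general
  `L` of type `f` the slice `Y ∩ L` misses a hyperplane of the factor `i`, which forces its image
  in that factor to be finite (`finite_factor`). This holds for every `i`, so `Y ∩ L` is finite.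

That emptiness of one slice implies emptiness of a dense open set of slices is
`isOpen_dense_empty`. It rests on the main theorem of elimination theory for multiprojective
space (`elimination`), stated over an arbitrary `ℂ`-algebra `A` of parameters: a multigraded
Nullstellensatz makes a graded piece of the coordinate ring vanish at the given parameter, and
Nakayama's lemma makes it vanish nearby. Taking for `A` the continuous functions on the parameter
space gives openness, and taking `A = ℂ[t]` gives density along lines, as well as
`finite_factor`.
-/

open scoped BigOperators

namespace MultiProj

variable {ι : Type*} [Fintype ι] [DecidableEq ι]

/-- Multiprojective space: a product of complex projective spaces `ℙ^{n i}`. -/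
abbrev PStack (n : ι → ℕ) := (i : ι) → Projectivization ℂ (Fin (n i + 1) → ℂ)

/-- A linear form (given by its coefficient vector) vanishes at a point of the
projectivization of a coordinate space. -/
def PLinVanish {κ : Type*} [Fintype κ] (c : κ → ℂ)
    (p : Projectivization ℂ (κ → ℂ)) : Prop :=
  ∀ (v : κ → ℂ) (hv : v ≠ 0), Projectivization.mk ℂ v hv = p → ∑ a, c a * v a = 0

/-- A polynomial in the multihomogeneous coordinates vanishes at a point of the
multiprojective space, i.e. at every system of homogeneous representatives. -/
def PolyVanish {n : ι → ℕ} (f : MvPolynomial ((i : ι) × Fin (n i + 1)) ℂ)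
    (x : PStack n) : Prop :=
  ∀ v : (i : ι) → Fin (n i + 1) → ℂ,
    (∀ i, ∃ hv : v i ≠ 0, Projectivization.mk ℂ (v i) hv = x i) →
    MvPolynomial.eval (fun p => v p.1 p.2) f = 0

/-- Algebraic subsets of multiprojective space. -/
def IsAlgebraicSet {n : ι → ℕ} (X : Set (PStack n)) : Prop :=
  ∃ F : Set (MvPolynomial ((i : ι) × Fin (n i + 1)) ℂ),
    X = {x | ∀ f ∈ F, PolyVanish f x}

/-- Irreducible multiprojective varieties: nonempty algebraic sets that are not
contained in the union of two algebraic sets without being contained in one. -/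
def IsIrredVariety {n : ι → ℕ} (X : Set (PStack n)) : Prop :=
  IsAlgebraicSet X ∧ X.Nonempty ∧
    ∀ A B : Set (PStack n), IsAlgebraicSet A → IsAlgebraicSet B →
      X ⊆ A ∪ B → (X ⊆ A ∨ X ⊆ B)

/-- An irreducible component of a multiprojective variety. -/
def IsComponentOf {n : ι → ℕ} (Y X : Set (PStack n)) : Prop :=
  IsIrredVariety Y ∧ Y ⊆ X ∧
    ∀ Y' : Set (PStack n), IsIrredVariety Y' → Y ⊆ Y' → Y' ⊆ X → Y' = Y

/-- Parameter space for a multilinear slice of type `e`: `e i` linear forms in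
the variables of the `i`-th factor. -/
abbrev SliceParams (n : ι → ℕ) (e : ι → ℕ) :=
  (i : ι) → Fin (e i) → (Fin (n i + 1) → ℂ)

/-- The common zero set in multiprojective space of a multilinear slice. -/
def SliceZeros {n : ι → ℕ} {e : ι → ℕ} (L : SliceParams n e) : Set (PStack n) :=
  {x | ∀ (i : ι) (j : Fin (e i)), PLinVanish (L i j) (x i)}

/-- A property holds generically (on a dense open set) of a parameter. -/
def Generic {α : Type*} [TopologicalSpace α] (P : α → Prop) : Prop :=
  ∃ U : Set α, IsOpen U ∧ Dense U ∧ ∀ a ∈ U, P a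

/-- The multidimension `Dim(X)`: the set of vectors `e` such that a general
multilinear slice of type `e` meets `X` in finitely many, and at least one, points. -/
def MDim {n : ι → ℕ} (X : Set (PStack n)) : Set (ι → ℕ) :=
  {e | (∀ i, e i ≤ n i) ∧
    Generic (fun L : SliceParams n e =>
      (X ∩ SliceZeros L).Finite ∧ (X ∩ SliceZeros L).Nonempty)}

/-- `Deg_X(e) = d`: a general multilinear slice of type `e` meets `X` in exactly
`d` points. -/
def DegIs {n : ι → ℕ} (X : Set (PStack n)) (e : ι → ℕ) (d : ℕ) : Prop :=
  Generic (fun L : SliceParams n e =>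
    (X ∩ SliceZeros L).Finite ∧ (X ∩ SliceZeros L).ncard = d)

/-- The intrinsic dimension of a multiprojective variety, read off as the common
total degree of the vectors in its multidimension. -/
noncomputable def dimOf {n : ι → ℕ} (X : Set (PStack n)) : ℕ :=
  sSup {m | ∃ e ∈ MDim X, ∑ i, e i = m}

/-- Projection of the multiprojective space onto the factors indexed by `I`. -/
def resMap {n : ι → ℕ} (I : Finset ι) (x : PStack n) :
    PStack (fun i : {j // j ∈ I} => n i.1) :=
  fun i => x i.1

/-- `dim π_I(X)`: the dimension of the projection of `X` onto the factors
indexed by `I`. -/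
noncomputable def dimProj {n : ι → ℕ} (I : Finset ι) (X : Set (PStack n)) : ℕ :=
  dimOf (resMap I '' X)

/-- An equidimensional multiprojective variety: all irreducible components have
the same multidimension. -/
def Equidimensional {n : ι → ℕ} (X : Set (PStack n)) : Prop :=
  IsAlgebraicSet X ∧ X.Nonempty ∧
    ∀ Y Y' : Set (PStack n), IsComponentOf Y X → IsComponentOf Y' X →
      MDim Y = MDim Y'

/-- The set of lattice points of a polymatroid polytope inside the box `[n]`,
cut out by a submodular, monotone rank function. -/
def IsPolymatroidSet (n : ι → ℕ) (P : Set (ι → ℕ)) : Prop :=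
  ∃ r : Finset ι → ℕ,
    (∀ A B : Finset ι, r (A ∪ B) + r (A ∩ B) ≤ r A + r B) ∧
    (∀ A B : Finset ι, A ⊆ B → r A ≤ r B) ∧
    P = {e | (∀ i, e i ≤ n i) ∧ (∑ i, e i = r Finset.univ) ∧
          ∀ S : Finset ι, ∑ i ∈ S, e i ≤ r S}

section Product

variable {ι₁ ι₂ : Type*} [Fintype ι₁] [DecidableEq ι₁] [Fintype ι₂] [DecidableEq ι₂]

/-- Combine points of two multiprojective spaces into a point of the product
multiprojective space, indexed by the disjoint union of the index sets. -/
def combine {n₁ : ι₁ → ℕ} {n₂ : ι₂ → ℕ} (y : PStack n₁) (z : PStack n₂) :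
    PStack (Sum.elim n₁ n₂) := fun i =>
  match i with
  | Sum.inl a => y a
  | Sum.inr b => z b

/-- The Cartesian product of multiprojective varieties in disjoint factors. -/
def prodSet {n₁ : ι₁ → ℕ} {n₂ : ι₂ → ℕ} (Y : Set (PStack n₁)) (Z : Set (PStack n₂)) :
    Set (PStack (Sum.elim n₁ n₂)) :=
  {x | ∃ y ∈ Y, ∃ z ∈ Z, x = combine y z}

/-- Projection of the product multiprojective space onto the first group of factors. -/
def projL {n₁ : ι₁ → ℕ} {n₂ : ι₂ → ℕ} (x : PStack (Sum.elim n₁ n₂)) : PStack n₁ :=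
  fun a => x (Sum.inl a)

/-- Projection of the product multiprojective space onto the second group of factors. -/
def projR {n₁ : ι₁ → ℕ} {n₂ : ι₂ → ℕ} (x : PStack (Sum.elim n₁ n₂)) : PStack n₂ :=
  fun b => x (Sum.inr b)

end Product

section Segre

/-- Degree `δ` of a subset `S` of the projective space `ℙ(ℂ^κ)` of dimension `d`:
a general collection of `d` hyperplanes meets `S` in exactly `δ` points. -/
def ProjDegIs {κ : Type*} [Fintype κ] (S : Set (Projectivization ℂ (κ → ℂ)))
    (d : ℕ) (δ : ℕ) : Prop :=
  Generic (fun c : Fin d → κ → ℂ =>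
    (S ∩ {p | ∀ j, PLinVanish (c j) p}).Finite ∧
    (S ∩ {p | ∀ j, PLinVanish (c j) p}).ncard = δ)

/-- `σ` is a Segre embedding: on homogeneous representatives it is given by the
tensor (outer) product of the coordinate vectors of the factors. -/
def IsSegreMap (n : ι → ℕ)
    (σ : PStack n → Projectivization ℂ (((i : ι) → Fin (n i + 1)) → ℂ)) : Prop :=
  ∀ (x : PStack n) (v : (i : ι) → Fin (n i + 1) → ℂ),
    (∀ i, ∃ hv : v i ≠ 0, Projectivization.mk ℂ (v i) hv = x i) →
    ∃ h : (fun a : (i : ι) → Fin (n i + 1) => ∏ i, v i (a i)) ≠ 0,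
      Projectivization.mk ℂ (fun a : (i : ι) → Fin (n i + 1) => ∏ i, v i (a i)) h = σ x

end Segre

end MultiProj

open MultiProj

namespace MultiProj

open MvPolynomial

section Elimination

variable {ι : Type*} [Fintype ι] [DecidableEq ι]

/-! ### The multigrading and vanishing at points -/

/-- The weights giving the multigrading: a variable of the `i`-th factor has degree the
`i`-th unit vector of `ι → ℕ`. -/
def mw (n : ι → ℕ) : ((i : ι) × Fin (n i + 1)) → (ι → ℕ) := fun p => Pi.single p.1 1

theorem weight_mw (n : ι → ℕ) (m : ((i : ι) × Fin (n i + 1)) →₀ ℕ) (i : ι) :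
    Finsupp.weight (mw n) m i = ∑ a, m ⟨i, a⟩ := by
  rw [Finsupp.weight_apply, Finsupp.sum_fintype _ _ (by simp), Finset.sum_apply,
    Fintype.sum_sigma, Finset.sum_eq_single i]
  · simp [mw]
  · intro j _ hj
    exact Finset.sum_eq_zero fun a _ => by simp [mw, hj.symm]
  · simp

/-- The torus `(ℂˣ)^ι`, rescaling each block of coordinates, acts on forms of multidegree `d` by the
character `l ↦ l ^ d`. -/
theorem eval_scale {n : ι → ℕ} {f : MvPolynomial ((i : ι) × Fin (n i + 1)) ℂ} {d : ι → ℕ}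
    (hf : IsWeightedHomogeneous (mw n) f d) (l : ι → ℂ)
    (v : ((i : ι) × Fin (n i + 1)) → ℂ) :
    eval (fun p => l p.1 * v p) f = (∏ i, l i ^ d i) * eval v f := by
  rw [eval_eq', eval_eq', Finset.mul_sum]
  refine Finset.sum_congr rfl fun m hm => ?_
  have hw := hf (mem_support_iff.1 hm)
  have h1 : ∏ p : (i : ι) × Fin (n i + 1), l p.1 ^ m p = ∏ i, l i ^ d i := by
    rw [Fintype.prod_sigma]
    refine Finset.prod_congr rfl fun i _ => ?_
    rw [← hw, weight_mw, ← Finset.prod_pow_eq_pow_sum]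
  simp only [mul_pow, Finset.prod_mul_distrib, h1]
  ring

/-- A polynomial vanishing on a full torus orbit has all its multihomogeneous components
vanishing there, since distinct torus characters are linearly independent. -/
theorem eval_component_eq_zero {n : ι → ℕ} {f : MvPolynomial ((i : ι) × Fin (n i + 1)) ℂ}
    (v : ((i : ι) × Fin (n i + 1)) → ℂ)
    (h : ∀ l : ι → ℂ, (∀ i, l i ≠ 0) → eval (fun p => l p.1 * v p) f = 0) (d : ι → ℕ) :
    eval v (weightedHomogeneousComponent (mw n) d f) = 0 := by
  have hfin := weightedHomogeneousComponent_finsupp (w := mw n) f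
  set T := hfin.toFinset with hT
  have hsum : f = ∑ d ∈ T, weightedHomogeneousComponent (mw n) d f := by
    conv_lhs => rw [← sum_weightedHomogeneousComponent (mw n) f]
    exact finsum_eq_sum _ hfin
  set Q : MvPolynomial ι ℂ := ∑ d ∈ T, monomial (Finsupp.equivFunOnFinite.symm d)
    (eval v (weightedHomogeneousComponent (mw n) d f)) with hQ
  have hQ0 : Q = 0 := by
    refine funext_set (fun _ => {0}ᶜ) (fun _ => (Set.finite_singleton _).infinite_compl) ?_
    intro l hl
    have hl' : ∀ i, l i ≠ 0 := fun i => hl i (Set.mem_univ i)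
    rw [map_zero, ← h l hl', hQ, map_sum]
    conv_rhs => rw [hsum, map_sum]
    refine Finset.sum_congr rfl fun d _ => ?_
    rw [eval_scale (weightedHomogeneousComponent_isWeightedHomogeneous d f), eval_monomial,
      Finsupp.prod_fintype _ _ (by simp), mul_comm]
    simp
  by_cases hd : d ∈ T
  · have := congrArg (coeff (Finsupp.equivFunOnFinite.symm d)) hQ0
    rw [hQ, coeff_sum, Finset.sum_eq_single d] at this
    · simpa using this
    · intro b _ hb
      rw [coeff_monomial, if_neg]
      simpa using hb
    · exact fun hd' => absurd hd hd'
  · have : weightedHomogeneousComponent (mw n) d f = 0 := by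
      by_contra hne
      exact hd (hfin.mem_toFinset.2 hne)
    rw [this, map_zero]

theorem pLinVanish_mk {κ : Type*} [Fintype κ] (c v : κ → ℂ) (hv : v ≠ 0) :
    PLinVanish c (Projectivization.mk ℂ v hv) ↔ ∑ a, c a * v a = 0 := by
  refine ⟨fun h => h v hv rfl, fun h u hu huv => ?_⟩
  obtain ⟨l, rfl⟩ := (Projectivization.mk_eq_mk_iff' ℂ _ _ hu hv).1 huv
  simp only [Pi.smul_apply, smul_eq_mul, mul_left_comm _ l, ← Finset.mul_sum, h, mul_zero]

/-- The locus cut out in multiprojective space by a family of linear forms, the `k`-th one in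
the variables of the factor `κ k`. -/
def famZeros {n : ι → ℕ} {K : Type*} (κ : K → ι) (c : (k : K) → Fin (n (κ k) + 1) → ℂ) :
    Set (PStack n) :=
  {x | ∀ k, PLinVanish (c k) (x (κ k))}

/-- Vanishing of all multihomogeneous components at one system of representatives amounts to
vanishing at the point. -/
theorem polyVanish_mk {n : ι → ℕ} (f : MvPolynomial ((i : ι) × Fin (n i + 1)) ℂ)
    (v : (i : ι) → Fin (n i + 1) → ℂ) (hv : ∀ i, v i ≠ 0) :
    PolyVanish f (fun i => Projectivization.mk ℂ (v i) (hv i)) ↔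
      ∀ d, eval (fun p => v p.1 p.2) (weightedHomogeneousComponent (mw n) d f) = 0 := by
  constructor
  · intro h d
    refine eval_component_eq_zero _ (fun l hl => ?_) d
    exact h (fun i => l i • v i) fun i => ⟨smul_ne_zero (hl i) (hv i),
      (Projectivization.mk_eq_mk_iff' ℂ _ _ _ _).2 ⟨l i, rfl⟩⟩
  · intro h u hu
    choose hu0 hu using hu
    choose l hl using fun i => (Projectivization.mk_eq_mk_iff' ℂ _ _ (hu0 i) (hv i)).1 (hu i)
    obtain rfl : (fun i => l i • v i) = u := funext hl
    rw [← sum_weightedHomogeneousComponent (mw n) f,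
      finsum_eq_sum _ (weightedHomogeneousComponent_finsupp f), map_sum]
    refine Finset.sum_eq_zero fun d _ => ?_
    have := eval_scale (weightedHomogeneousComponent_isWeightedHomogeneous (w := mw n) d f) l
      (fun p => v p.1 p.2)
    rw [h d, mul_zero] at this
    exact this

/-! ### Elimination theory -/

/-- The ideal of the cone over a family of slices of `X` with coefficients `c` in a
`ℂ`-algebra `A`: all multihomogeneous forms vanishing on `X`, together with the linear
forms `c`. -/
noncomputable def sliceIdeal {n : ι → ℕ} (X : Set (PStack n)) {K : Type*} (κ : K → ι)
    {A : Type*} [CommRing A] [Algebra ℂ A] (c : (k : K) → Fin (n (κ k) + 1) → A) :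
    Ideal (MvPolynomial ((i : ι) × Fin (n i + 1)) A) :=
  Ideal.span ({p | ∃ f d, IsWeightedHomogeneous (mw n) f d ∧ (∀ x ∈ X, PolyVanish f x) ∧
      p = map (algebraMap ℂ A) f} ∪
    Set.range fun k => ∑ a, C (c k a) * MvPolynomial.X (⟨κ k, a⟩ : (i : ι) × Fin (n i + 1)))

theorem sliceIdeal_isHomogeneous {n : ι → ℕ} (X : Set (PStack n)) {K : Type*} (κ : K → ι)
    {A : Type*} [CommRing A] [Algebra ℂ A] (c : (k : K) → Fin (n (κ k) + 1) → A)
    {p : MvPolynomial ((i : ι) × Fin (n i + 1)) A} (hp : p ∈ sliceIdeal X κ c) (d : ι → ℕ) :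
    weightedHomogeneousComponent (mw n) d p ∈ sliceIdeal X κ c := by
  let _ : GradedAlgebra (weightedHomogeneousSubmodule A (mw n)) := weightedGradedAlgebra A (mw n)
  refine weightedHomogeneousComponent_mem_of_mem A (mw n) ?_ hp d
  refine Ideal.homogeneous_span _ _ ?_
  rintro _ (⟨f, d, hf, -, rfl⟩ | ⟨k, rfl⟩)
  · refine ⟨d, fun m hm => hf fun h0 => hm ?_⟩
    rw [coeff_map, h0, map_zero]
  · refine ⟨Pi.single (κ k) 1, ?_⟩
    refine Submodule.sum_mem _ fun a _ => ?_
    exact (isWeightedHomogeneous_X A (mw n) (⟨κ k, a⟩ : (i : ι) × Fin (n i + 1))).C_mul _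

/-- At a parameter value `φ`, the points of the slice of `X` are exactly the classes of the
zeros, with all blocks nonzero, of the specialized ideal. -/
theorem mem_slice_iff {n : ι → ℕ} {X : Set (PStack n)} (hX : IsAlgebraicSet X) {K : Type*}
    (κ : K → ι) {A : Type*} [CommRing A] [Algebra ℂ A] (c : (k : K) → Fin (n (κ k) + 1) → A)
    (φ : A →ₐ[ℂ] ℂ) (v : (i : ι) → Fin (n i + 1) → ℂ) (hv : ∀ i, v i ≠ 0) :
    (fun i => Projectivization.mk ℂ (v i) (hv i)) ∈ X ∩ famZeros κ (fun k a => φ (c k a)) ↔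
      ∀ p ∈ sliceIdeal X κ c, eval₂ φ.toRingHom (fun p => v p.1 p.2) p = 0 := by
  have hφ : φ.toRingHom.comp (algebraMap ℂ A) = RingHom.id ℂ := by
    ext z; simp
  constructor
  · rintro ⟨hx, hL⟩ p hp
    have : sliceIdeal X κ c ≤ RingHom.ker (eval₂Hom φ.toRingHom (fun p => v p.1 p.2)) := by
      refine Ideal.span_le.2 ?_
      rintro _ (⟨f, d, hf, hfX, rfl⟩ | ⟨k, rfl⟩)
      · have h0 := (polyVanish_mk f v hv).1 (hfX _ hx) d
        rw [hf.weightedHomogeneousComponent_same] at h0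
        simpa [RingHom.mem_ker, eval₂_map, hφ] using h0
      · have h0 := (pLinVanish_mk _ _ (hv (κ k))).1 (hL k)
        simpa [RingHom.mem_ker] using h0
    exact this hp
  · intro h
    refine ⟨?_, fun k => ?_⟩
    · obtain ⟨F, rfl⟩ := hX
      intro f hf
      refine (polyVanish_mk f v hv).2 fun d => ?_
      have h0 := h (map (algebraMap ℂ A) (weightedHomogeneousComponent (mw n) d f))
        (Ideal.subset_span (Or.inl ⟨_, d,
          weightedHomogeneousComponent_isWeightedHomogeneous d f, ?_, rfl⟩))
      · simpa [eval₂_map, hφ] using h0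
      · intro x hx
        have hxr : x = fun i => Projectivization.mk ℂ (x i).rep (x i).rep_nonzero := by
          funext i; exact (Projectivization.mk_rep _).symm
        have h1 := hx f hf
        rw [hxr] at h1 ⊢
        rw [polyVanish_mk] at h1 ⊢
        intro d'
        by_cases hd : d' = d
        · subst hd
          rw [(weightedHomogeneousComponent_isWeightedHomogeneous d' f).weightedHomogeneousComponent_same]
          exact h1 d'
        · rw [(weightedHomogeneousComponent_isWeightedHomogeneous d f).weightedHomogeneousComponent_ne d' hd, map_zero]
    · refine (pLinVanish_mk _ _ (hv (κ k))).2 ?_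
      simpa using h _ (Ideal.subset_span (Or.inr ⟨k, rfl⟩))

/-- Multigraded projective Nullstellensatz: an ideal with no zeros all of whose blocks are
nonzero contains every monomial of some multidegree `(D, ..., D)`. -/
theorem exists_monomial_mem {n : ι → ℕ} (J : Ideal (MvPolynomial ((i : ι) × Fin (n i + 1)) ℂ))
    (hJ : ∀ v : (i : ι) → Fin (n i + 1) → ℂ, (∀ i, v i ≠ 0) →
      ∃ p ∈ J, eval (fun p => v p.1 p.2) p ≠ 0) :
    ∃ D : ℕ, ∀ m : ((i : ι) × Fin (n i + 1)) →₀ ℕ,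
      Finsupp.weight (mw n) m = (fun _ => D) → monomial m (1 : ℂ) ∈ J := by
  have hrad : ∀ a : (i : ι) → Fin (n i + 1), ∃ N : ℕ,
      (∏ i, (X ⟨i, a i⟩ : MvPolynomial ((i : ι) × Fin (n i + 1)) ℂ)) ^ N ∈ J := by
    intro a
    suffices h : (∏ i, (X ⟨i, a i⟩ : MvPolynomial ((i : ι) × Fin (n i + 1)) ℂ)) ∈ J.radical from h
    rw [← vanishingIdeal_zeroLocus_eq_radical (K := ℂ)]
    intro y hy
    by_contra hne
    rw [map_prod, ← ne_eq, Finset.prod_ne_zero_iff] at hne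
    obtain ⟨p, hp, hpe⟩ := hJ (fun i b => y ⟨i, b⟩) fun i h0 => by
      have := hne i (Finset.mem_univ i)
      rw [aeval_X] at this
      exact this (congrFun h0 (a i))
    exact hpe (by simpa [aeval_eq_eval] using hy p hp)
  choose N hN using hrad
  set M := ∑ a, N a with hM
  have hNM : ∀ a, N a ≤ M := fun a => Finset.single_le_sum (fun _ _ => Nat.zero_le _)
    (Finset.mem_univ a)
  refine ⟨(∑ i, (n i + 1)) * M, fun m hm => ?_⟩
  -- pigeonhole: in each block some variable occurs with exponent at least `M`
  have hex : ∀ i, ∃ a, M ≤ m ⟨i, a⟩ := by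
    intro i
    by_contra! hlt
    have h1 := congrFun hm i
    rw [weight_mw] at h1
    have h2 : ∑ a, m ⟨i, a⟩ < ∑ _a : Fin (n i + 1), M :=
      Finset.sum_lt_sum_of_nonempty Finset.univ_nonempty fun a _ => hlt a
    have h3 : n i + 1 ≤ ∑ i, (n i + 1) :=
      Finset.single_le_sum (f := fun i => n i + 1) (fun _ _ => Nat.zero_le _) (Finset.mem_univ i)
    have h4 := Nat.mul_le_mul_right M h3
    simp only [Finset.sum_const, Finset.card_univ, Fintype.card_fin, smul_eq_mul] at h2
    omega
  choose a ha using hex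
  refine J.mem_of_dvd ?_ (hN a)
  have hle : (∑ i, Finsupp.single (⟨i, a i⟩ : (i : ι) × Fin (n i + 1)) (N a)) ≤ m := by
    rintro ⟨i, b⟩
    rw [Finsupp.finsetSum_apply, Finset.sum_eq_single i]
    · by_cases hb : b = a i
      · subst hb
        simpa using (hNM a).trans (ha i)
      · rw [Finsupp.single_apply, if_neg]
        · exact Nat.zero_le _
        · simpa [Sigma.mk.injEq] using Ne.symm hb
    · intro j _ hj
      rw [Finsupp.single_apply, if_neg]
      intro h
      exact hj (congrArg Sigma.fst h)
    · simp
  have heq : (∏ i, (X ⟨i, a i⟩ : MvPolynomial ((i : ι) × Fin (n i + 1)) ℂ)) ^ N a =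
      monomial (∑ i, Finsupp.single (⟨i, a i⟩ : (i : ι) × Fin (n i + 1)) (N a)) 1 := by
    rw [← Finset.prod_pow, monomial_sum_one]
    exact Finset.prod_congr rfl fun i _ => X_pow_eq_monomial
  rw [heq]
  exact (monomial_dvd_monomial).2 ⟨Or.inr hle, one_dvd _⟩

/-- The fundamental theorem of elimination theory for slices of `X`: if the slice at `φ₀` is
empty then so are all slices at parameters outside the zero locus of some `g` with
`φ₀ g ≠ 0`. Nakayama's lemma, applied to a graded piece of the coordinate ring of the
family, spreads emptiness from `φ₀` to a neighbourhood. -/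
theorem elimination {n : ι → ℕ} {X : Set (PStack n)} (hX : IsAlgebraicSet X) {K : Type*}
    (κ : K → ι) {A : Type*} [CommRing A] [Algebra ℂ A] (c : (k : K) → Fin (n (κ k) + 1) → A)
    (φ₀ : A →ₐ[ℂ] ℂ) (h₀ : X ∩ famZeros κ (fun k a => φ₀ (c k a)) = ∅) :
    ∃ g : A, φ₀ g ≠ 0 ∧ ∀ φ : A →ₐ[ℂ] ℂ, φ g ≠ 0 →
      X ∩ famZeros κ (fun k a => φ (c k a)) = ∅ := by
  have hsurj : Function.Surjective φ₀.toRingHom := fun z => ⟨algebraMap ℂ A z, by simp⟩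
  have hmsurj : Function.Surjective (map (σ := (i : ι) × Fin (n i + 1)) φ₀.toRingHom) :=
    map_surjective _ hsurj
  obtain ⟨D, hD⟩ := exists_monomial_mem (n := n)
    ((sliceIdeal X κ c).map (map φ₀.toRingHom)) (by
      intro v hv
      by_contra! hcon
      have : (fun i => Projectivization.mk ℂ (v i) (hv i)) ∈
          X ∩ famZeros κ (fun k a => φ₀ (c k a)) := by
        rw [mem_slice_iff hX]
        intro p hp
        have := hcon _ (Ideal.mem_map_of_mem _ hp)
        rwa [eval_map] at this
      rw [h₀] at this
      exact this)
  set J := sliceIdeal X κ c with hJ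
  set S : Set (((i : ι) × Fin (n i + 1)) →₀ ℕ) :=
    {m | Finsupp.weight (mw n) m = fun _ => D} with hS
  have hSfin : S.Finite := by
    refine (Set.finite_Iic (Finsupp.equivFunOnFinite.symm fun _ => D)).subset ?_
    rintro m hm ⟨i, a⟩
    have h1 := congrFun hm i
    rw [weight_mw] at h1
    simpa [← h1] using Finset.single_le_sum (f := fun a => m ⟨i, a⟩)
      (fun _ _ => Nat.zero_le _) (Finset.mem_univ a)
  let q : MvPolynomial ((i : ι) × Fin (n i + 1)) A →ₗ[A]
      (MvPolynomial ((i : ι) × Fin (n i + 1)) A ⧸ J) := (Ideal.Quotient.mkₐ A J).toLinearMap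
  have hq : ∀ p, q p = 0 ↔ p ∈ J := fun p => Ideal.Quotient.eq_zero_iff_mem
  obtain ⟨g, hg1, hg⟩ := Submodule.exists_sub_one_mem_and_smul_eq_zero_of_fg_of_le_smul
    (RingHom.ker φ₀.toRingHom)
    (Submodule.span A ((fun m => q (monomial m 1)) '' S))
    (Submodule.fg_span (hSfin.image _)) (by
      rw [Submodule.span_le]
      rintro _ ⟨m, hm, rfl⟩
      obtain ⟨h, hhJ, hh⟩ := (Ideal.mem_map_iff_of_surjective _ hmsurj).1 (hD m hm)
      set r := weightedHomogeneousComponent (mw n) (fun _ => D) (monomial m (1 : A) - h) with hr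
      have hqr : q (monomial m 1) = q r := by
        rw [← sub_eq_zero, ← map_sub, hq, hr, map_sub,
          (isWeightedHomogeneous_monomial (mw n) m (1 : A) hm).weightedHomogeneousComponent_same,
          sub_sub_cancel]
        exact sliceIdeal_isHomogeneous X κ c hhJ _
      have hcoef : ∀ b, coeff b r ∈ RingHom.ker φ₀.toRingHom := by
        intro b
        rw [hr, coeff_weightedHomogeneousComponent]
        split_ifs
        · have := congrArg (coeff b) hh
          rw [coeff_map] at this
          rw [RingHom.mem_ker, coeff_sub, map_sub, this, coeff_monomial, coeff_monomial]
          split_ifs <;> simp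
        · exact zero_mem _
      show q (monomial m 1) ∈ _
      rw [hqr, ← support_sum_monomial_coeff r, map_sum]
      refine Submodule.sum_mem _ fun b hb => ?_
      have hbS : b ∈ S :=
        weightedHomogeneousComponent_isWeightedHomogeneous (w := mw n) _ _ (mem_support_iff.1 hb)
      have : monomial b (coeff b r) = coeff b r • monomial b (1 : A) := by
        rw [smul_monomial, smul_eq_mul, mul_one]
      rw [this, map_smul]
      exact Submodule.smul_mem_smul (hcoef b) (Submodule.subset_span ⟨b, hbS, rfl⟩))
  refine ⟨g, ?_, fun φ hφ => ?_⟩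
  · rw [RingHom.mem_ker, map_sub, map_one, sub_eq_zero] at hg1
    have : φ₀ g = 1 := hg1
    rw [this]
    exact one_ne_zero
  · rw [Set.eq_empty_iff_forall_notMem]
    intro x hx
    have hxr : x = fun i => Projectivization.mk ℂ (x i).rep (x i).rep_nonzero := by
      funext i; exact (Projectivization.mk_rep _).symm
    rw [hxr, mem_slice_iff hX] at hx
    have hne : ∀ i, ∃ a, (x i).rep a ≠ 0 := fun i => Function.ne_iff.1 (x i).rep_nonzero
    choose a ha using hne
    -- a monomial of multidegree `(D, ..., D)` not vanishing at the chosen representatives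
    set m : ((i : ι) × Fin (n i + 1)) →₀ ℕ :=
      Finsupp.equivFunOnFinite.symm fun p => if p.2 = a p.1 then D else 0 with hm
    have hmS : m ∈ S := by
      funext i
      rw [weight_mw]
      simp [hm]
    have h1 := hg _ (Submodule.subset_span ⟨m, hmS, rfl⟩)
    rw [← map_smul, hq] at h1
    have h2 := hx _ h1
    rw [smul_monomial, eval₂_monomial, smul_eq_mul, mul_one] at h2
    refine (mul_ne_zero hφ (Finset.prod_ne_zero_iff.2 ?_)) h2
    rintro ⟨i, b⟩ hb
    refine pow_ne_zero _ ?_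
    by_cases hba : b = a i
    · rw [hba]; exact ha i
    · exact absurd (by simp [hm, hba]) (Finsupp.mem_support_iff.1 hb)

/-! ### General slices -/

/-- Along a line of slices of `X` through an empty one, all but finitely many are empty:
elimination over `ℂ[t]`. -/
theorem finite_line {n : ι → ℕ} {X : Set (PStack n)} (hX : IsAlgebraicSet X) {K : Type*}
    (κ : K → ι) (c₀ c₁ : (k : K) → Fin (n (κ k) + 1) → ℂ) (h₀ : X ∩ famZeros κ c₀ = ∅) :
    {s : ℂ | (X ∩ famZeros κ fun k a => c₀ k a + s * c₁ k a).Nonempty}.Finite := by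
  have hev : ∀ s : ℂ, (fun k a => Polynomial.aeval s
      (Polynomial.C (c₀ k a) + Polynomial.X * Polynomial.C (c₁ k a))) =
      fun (k : K) (a : Fin (n (κ k) + 1)) => c₀ k a + s * c₁ k a := by
    intro s; funext k a
    rw [map_add, map_mul, Polynomial.aeval_C, Polynomial.aeval_C, Polynomial.aeval_X]
    rfl
  obtain ⟨g, hg0, hg⟩ := elimination hX κ (A := Polynomial ℂ)
    (fun k a => Polynomial.C (c₀ k a) + Polynomial.X * Polynomial.C (c₁ k a))
    (Polynomial.aeval 0) (by rw [hev 0]; simpa using h₀)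
  have hg' : g ≠ 0 := by rintro rfl; simp at hg0
  refine (Polynomial.finite_setOfPred_isRoot hg').subset fun s hs => ?_
  by_contra hne
  have := hg (Polynomial.aeval s) (by rwa [Polynomial.coe_aeval_eq_eval])
  rw [hev s] at this
  exact hs.ne_empty this

/-- If the coefficients of a family of slices depend continuously and linearly on a parameter
in a topological vector space and one slice is empty, then the parameters with empty slice
form a dense open set. Openness is elimination over the ring of continuous functions,
density is elimination along the lines through the given parameter. -/
theorem isOpen_dense_empty {n : ι → ℕ} {X : Set (PStack n)} (hX : IsAlgebraicSet X) {K : Type*}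
    (κ : K → ι) {V : Type*} [AddCommGroup V] [Module ℂ V] [TopologicalSpace V]
    [IsTopologicalAddGroup V] [ContinuousSMul ℂ V]
    (c : (k : K) → Fin (n (κ k) + 1) → V → ℂ) (hc : ∀ k a, Continuous (c k a))
    (hlin : ∀ k a v w, ∀ s : ℂ, c k a (v + s • w) = c k a v + s * c k a w)
    (v₀ : V) (h₀ : X ∩ famZeros κ (fun k a => c k a v₀) = ∅) :
    IsOpen {v | X ∩ famZeros κ (fun k a => c k a v) = ∅} ∧
      Dense {v | X ∩ famZeros κ (fun k a => c k a v) = ∅} := by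
  constructor
  · rw [isOpen_iff_mem_nhds]
    intro v hv
    obtain ⟨g, hg0, hg⟩ := elimination hX κ (A := C(V, ℂ)) (fun k a => ⟨c k a, hc k a⟩)
      (ContinuousMap.evalAlgHom ℂ ℂ v) hv
    filter_upwards [g.continuous.continuousAt.eventually_ne hg0] with u hu
    exact hg (ContinuousMap.evalAlgHom ℂ ℂ u) hu
  · intro v
    have hfin := finite_line hX κ (fun k a => c k a v₀) (fun k a => c k a (v - v₀)) h₀
    have hd : Dense ({s : ℂ | (X ∩ famZeros κ fun k a =>
        c k a v₀ + s * c k a (v - v₀)).Nonempty}ᶜ) := hfin.countable.dense_compl ℂ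
    have hcont : Continuous fun s : ℂ => v₀ + s • (v - v₀) := by fun_prop
    have h1 := hcont.range_subset_closure_image_dense hd ⟨1, rfl⟩
    beta_reduce at h1
    rw [one_smul, add_sub_cancel] at h1
    refine closure_mono ?_ h1
    rintro _ ⟨s, hs, rfl⟩
    simp only [Set.mem_ofPred_eq, hlin]
    exact Set.not_nonempty_iff_eq_empty.1 hs

/-- The family `c` of linear forms together with one more form `l` in the factor `i`. -/
def optFam {n : ι → ℕ} {K : Type*} (κ : K → ι) {A : Type*} (i : ι)
    (c : (k : K) → Fin (n (κ k) + 1) → A) (l : Fin (n i + 1) → A) :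
    (o : Option K) → Fin (n (o.elim i κ) + 1) → A
  | none => l
  | some k => c k

theorem famZeros_optFam {n : ι → ℕ} {K : Type*} (κ : K → ι) (i : ι)
    (c : (k : K) → Fin (n (κ k) + 1) → ℂ) (l : Fin (n i + 1) → ℂ) :
    famZeros (fun o : Option K => o.elim i κ) (optFam κ i c l) =
      famZeros κ c ∩ {x | PLinVanish l (x i)} := by
  ext x
  exact Option.forall.trans and_comm

/-- A multiprojective algebraic set missing a hyperplane of the factor `i` has finite image in
that factor: each affine coordinate `x_a / l` takes finitely many values, since the
hyperplanes `l = s x_a` also miss the set for all but finitely many `s`. -/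
theorem finite_factor {n : ι → ℕ} {X : Set (PStack n)} (hX : IsAlgebraicSet X) {K : Type*}
    (κ : K → ι) (i : ι) (c : (k : K) → Fin (n (κ k) + 1) → ℂ) (l : Fin (n i + 1) → ℂ)
    (h : X ∩ (famZeros κ c ∩ {x | PLinVanish l (x i)}) = ∅) :
    ((fun x : PStack n => x i) '' (X ∩ famZeros κ c)).Finite := by
  have hfin : ∀ a : Fin (n i + 1), {s : ℂ | (X ∩ (famZeros κ c ∩
      {x | PLinVanish (fun b => l b + s * (Pi.single a (-1) : Fin (n i + 1) → ℂ) b)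
        (x i)})).Nonempty}.Finite := by
    intro a
    have := finite_line hX (fun o : Option K => o.elim i κ) (optFam κ i c l)
      (optFam κ i (fun _ _ => 0) (Pi.single a (-1))) (by rwa [famZeros_optFam])
    have e : ∀ s : ℂ, famZeros κ c ∩
        {x | PLinVanish (fun b => l b + s * (Pi.single a (-1) : Fin (n i + 1) → ℂ) b) (x i)} =
        famZeros (fun o : Option K => o.elim i κ) (fun o b => optFam κ i c l o b +
          s * optFam κ i (fun _ _ => 0) (Pi.single a (-1)) o b) := by
      intro s
      rw [← famZeros_optFam]
      congr 1
      funext o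
      cases o with
      | none => rfl
      | some k => funext a; simp [optFam]
    simp only [e]
    exact this
  choose T hT using fun a => (hfin a).exists_finset_coe
  have hR : (Set.pi Set.univ fun a => insert (0 : ℂ) ((fun s => s⁻¹) '' (T a : Set ℂ))).Finite :=
    Set.Finite.pi fun a => ((T a).finite_toSet.image _).insert 0
  classical
  refine (hR.image fun r => if hr : r ≠ 0 then Projectivization.mk ℂ r hr
    else Projectivization.mk ℂ 1 one_ne_zero).subset ?_
  rintro _ ⟨x, ⟨hxX, hxL⟩, rfl⟩
  -- `x i` is recovered from the vector of the values `x_a / l`, and `l = s x_a` holds at `x`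
  -- for `s = l / x_a`
  set u := (x i).rep with hu
  have hu0 : u ≠ 0 := (x i).rep_nonzero
  have hxu : x i = Projectivization.mk ℂ u hu0 := (Projectivization.mk_rep _).symm
  set y := ∑ b, l b * u b with hy
  have hy0 : y ≠ 0 := by
    intro h0
    have : x ∈ X ∩ (famZeros κ c ∩ {x | PLinVanish l (x i)}) := by
      refine ⟨hxX, hxL, ?_⟩
      show PLinVanish l (x i)
      rw [hxu, pLinVanish_mk]; exact h0
    rw [h] at this
    exact this
  have hyu : y⁻¹ • u ≠ 0 := smul_ne_zero (inv_ne_zero hy0) hu0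
  refine ⟨y⁻¹ • u, fun a _ => ?_, ?_⟩
  · by_cases ha : u a = 0
    · left; simp [ha]
    · right
      refine ⟨y / u a, ?_, by simp [div_eq_mul_inv, mul_comm]⟩
      rw [hT]
      refine ⟨x, hxX, hxL, ?_⟩
      show PLinVanish _ (x i)
      rw [hxu, pLinVanish_mk]
      simp only [add_mul, Finset.sum_add_distrib, mul_assoc, ← Finset.mul_sum]
      have hsum : ∑ b, (Pi.single a (-1) : Fin (n i + 1) → ℂ) b * u b = -u a := by
        rw [Finset.sum_eq_single a (fun b _ hb => by simp [hb]) (by simp)]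
        simp
      rw [hsum, ← hy]
      field_simp
      simp
  · simp only [dif_pos hyu]
    rw [hxu]
    exact (Projectivization.mk_eq_mk_iff' ℂ _ _ _ _).2 ⟨y⁻¹, rfl⟩

end Elimination

section Slices

/-! ### Multidimensions of projections -/

variable {ι : Type*} [Fintype ι] [DecidableEq ι]

/-- The slices of the projection of `X` are the projections of slices of `X` by forms in the
factors of `I` only. -/
theorem resMap_inter_sliceZeros {n : ι → ℕ} (X : Set (PStack n)) (I : Finset ι)
    {f : {j // j ∈ I} → ℕ} (L : SliceParams (fun i : {j // j ∈ I} => n i.1) f) :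
    resMap I '' X ∩ SliceZeros L = resMap I '' (X ∩ famZeros
      (fun k : (j : {j // j ∈ I}) × Fin (f j) => k.1.1) (fun k => L k.1 k.2)) := by
  ext y
  constructor
  · rintro ⟨⟨x, hx, rfl⟩, hL⟩
    exact ⟨x, ⟨hx, fun k => hL k.1 k.2⟩, rfl⟩
  · rintro ⟨x, ⟨hx, hL⟩, rfl⟩
    exact ⟨⟨x, hx, rfl⟩, fun j k => hL ⟨j, k⟩⟩

/-- If all slices of type `f` meet a set, then `f` does not exceed the dimensions of the
factors: the coordinate forms of `ℙ^{n j}` have no common zero. -/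
theorem le_of_forall_nonempty {n : ι → ℕ} {Y : Set (PStack n)} {f : ι → ℕ}
    (h : ∀ L : SliceParams n f, (Y ∩ SliceZeros L).Nonempty) (j : ι) : f j ≤ n j := by
  by_contra! hlt
  obtain ⟨y, -, hy⟩ := h fun _ k a => if a.1 = k.1 then 1 else 0
  refine (y j).rep_nonzero (funext fun a => ?_)
  have := hy j ⟨a.1, by omega⟩ (y j).rep (y j).rep_nonzero (Projectivization.mk_rep _)
  simpa [Fin.val_inj] using this

/-- If all slices of the projection of type `f` are nonempty, but no single form can be
added keeping this property, then `f` is a multidimension of the projection. -/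
theorem mem_mDim_of_maximal {n : ι → ℕ} {X : Set (PStack n)} (hX : IsAlgebraicSet X)
    (I : Finset ι) (f : {j // j ∈ I} → ℕ)
    (hf : ∀ L : SliceParams (fun i : {j // j ∈ I} => n i.1) f,
      (resMap I '' X ∩ SliceZeros L).Nonempty)
    (hmax : ∀ i, ∃ L : SliceParams (fun i : {j // j ∈ I} => n i.1) (Function.update f i (f i + 1)),
      resMap I '' X ∩ SliceZeros L = ∅) :
    f ∈ MDim (resMap I '' X) := by
  refine ⟨le_of_forall_nonempty hf, ?_⟩
  let κ : (j : {j // j ∈ I}) × Fin (f j) → ι := fun k => k.1.1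
  let P := SliceParams (fun i : {j // j ∈ I} => n i.1) f
  -- for general `L` some further form in the factor `i` makes the slice empty
  have key : ∀ i : {j // j ∈ I}, ∃ U : Set P, IsOpen U ∧ Dense U ∧
      ∀ L ∈ U, ∃ l : Fin (n i.1 + 1) → ℂ,
        X ∩ (famZeros κ (fun k => L k.1 k.2) ∩ {x | PLinVanish l (x i.1)}) = ∅ := by
    intro i
    obtain ⟨L', hL'⟩ := hmax i
    have hle : ∀ j, f j ≤ Function.update f i (f i + 1) j := by
      intro j
      by_cases hj : j = i
      · subst hj; simp
      · simp [hj]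
    let c : (o : Option ((j : {j // j ∈ I}) × Fin (f j))) → Fin (n (o.elim i.1 κ) + 1) →
        P × (Fin (n i.1 + 1) → ℂ) → ℂ :=
      optFam κ i.1 (fun k a p => p.1 k.1 k.2 a) (fun a p => p.2 a)
    have hc : ∀ p : P × (Fin (n i.1 + 1) → ℂ), famZeros
        (fun o : Option ((j : {j // j ∈ I}) × Fin (f j)) => o.elim i.1 κ) (fun o a => c o a p) =
        famZeros κ (fun k => p.1 k.1 k.2) ∩ {x | PLinVanish p.2 (x i.1)} := by
      intro p
      rw [← famZeros_optFam]
      congr 1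
      funext o
      cases o <;> rfl
    obtain ⟨ho, hd⟩ := isOpen_dense_empty hX
      (fun o : Option ((j : {j // j ∈ I}) × Fin (f j)) => o.elim i.1 κ) c
      (by rintro (_ | k) a
          · exact (continuous_apply a).comp continuous_snd
          · exact (continuous_apply a).comp ((continuous_apply k.2).comp
              ((continuous_apply k.1).comp continuous_fst)))
      (by rintro (_ | k) a v w s <;> rfl)
      (fun j k => L' j (Fin.castLE (hle j) k), L' i ⟨f i, by simp⟩)
      (by
        rw [hc, Set.eq_empty_iff_forall_notMem]
        rintro x ⟨hxX, hx1, hx2⟩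
        have : resMap I x ∈ resMap I '' X ∩ SliceZeros L' := by
          refine ⟨⟨x, hxX, rfl⟩, fun j k => ?_⟩
          by_cases hk : k.1 < f j
          · exact hx1 ⟨j, ⟨k.1, hk⟩⟩
          · have hk2 : k.1 < Function.update f i (f i + 1) j := k.2
            generalize hkv : k.1 = kv at hk hk2
            by_cases hj : j = i
            · subst hj
              have hkf : k = ⟨f j, by simp⟩ := by
                apply Fin.ext
                rw [Function.update_self] at hk2
                show k.1 = f j
                omega
              rw [hkf]
              exact hx2
            · rw [Function.update_of_ne hj] at hk2
              exact absurd hk2 hk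
        rw [hL'] at this
        exact this)
    refine ⟨Prod.fst '' {p | X ∩ famZeros
      (fun o : Option ((j : {j // j ∈ I}) × Fin (f j)) => o.elim i.1 κ)
      (fun o a => c o a p) = ∅},
      isOpenMap_fst _ ho, Prod.fst_surjective.denseRange.dense_image continuous_fst hd, ?_⟩
    rintro _ ⟨p, hp, rfl⟩
    refine ⟨p.2, ?_⟩
    rw [← hc]
    exact hp
  choose U hUo hUd hU using key
  refine ⟨⋂ i, U i, isOpen_iInter_of_finite hUo, ?_, fun L hL => ⟨?_, hf L⟩⟩
  · exact dense_iInter_of_isOpen hUo hUd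
  · refine Set.Finite.subset (Set.Finite.pi' (t := fun i : {j // j ∈ I} =>
      (fun y : PStack (fun i : {j // j ∈ I} => n i.1) => y i) '' (resMap I '' X ∩ SliceZeros L))
      fun i => ?_) fun y hy i => ⟨y, hy, rfl⟩
    obtain ⟨l, hl⟩ := hU i L (Set.mem_iInter.1 hL i)
    rw [resMap_inter_sliceZeros, Set.image_image]
    exact finite_factor hX κ i.1 (fun k => L k.1 k.2) l hl

/-- If the general slice of `X` of type `e` is nonempty, then every slice of the projection by
forms of type `e|_I` is nonempty. -/
theorem forall_nonempty_of_mDim {n : ι → ℕ} {X : Set (PStack n)} (hX : IsAlgebraicSet X)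
    {e : ι → ℕ} (he : e ∈ MDim X) (I : Finset ι)
    (L : SliceParams (fun i : {j // j ∈ I} => n i.1) (fun i => e i.1)) :
    (resMap I '' X ∩ SliceZeros L).Nonempty := by
  obtain ⟨-, U, hUo, hUd, hU⟩ := he
  rw [resMap_inter_sliceZeros, Set.image_nonempty, Set.nonempty_iff_ne_empty]
  intro hemp
  obtain ⟨-, hd⟩ := isOpen_dense_empty hX
    (fun k : (j : {j // j ∈ I}) × Fin (e j.1) => k.1.1) (V := SliceParams n e)
    (fun k a L => L k.1.1 k.2 a)
    (fun k a => (continuous_apply a).comp ((continuous_apply k.2).comp (continuous_apply k.1.1)))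
    (fun _ _ _ _ _ => rfl)
    -- extend the given forms by zero to the factors outside `I`, where they are not used
    (fun i k => if hi : i ∈ I then L ⟨i, hi⟩ k else 0)
    (by
      convert hemp using 3
      funext k a
      simp only [dif_pos k.1.2])
  obtain ⟨L', hL', hL'U⟩ := hd.inter_open_nonempty U hUo
    (hUd.nonempty (h := ⟨fun _ _ _ => 0⟩))
  obtain ⟨x, hxX, hx⟩ := (hU L' hL').2
  have : x ∈ X ∩ famZeros (fun k : (j : {j // j ∈ I}) × Fin (e j.1) => k.1.1)
      (fun k a => L' k.1.1 k.2 a) := ⟨hxX, fun k => hx k.1.1 k.2⟩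
  rw [hL'U] at this
  exact this

end Slices

end MultiProj

/-- If `X` is an irreducible multiprojective variety and `e` is a
multidimension vector for `X`, then for any subset `I` of the factors,
`∑_{i ∈ I} e i ≤ dim π_I(X)`. -/
theorem multidim_proj_ineq {ι : Type*} [Fintype ι] [DecidableEq ι] {n : ι → ℕ}
    (X : Set (PStack n)) (hX : IsIrredVariety X)
    (e : ι → ℕ) (he : e ∈ MDim X) (I : Finset ι) :
    ∑ i ∈ I, e i ≤ dimProj I X := by
  have hA := hX.1
  let P : ({j // j ∈ I} → ℕ) → Prop := fun f =>
    ∀ L : SliceParams (fun i : {j // j ∈ I} => n i.1) f, (resMap I '' X ∩ SliceZeros L).Nonempty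
  -- the total degrees of the good types, those for which every slice meets the projection
  let S : Set ℕ := {m | ∃ f, P f ∧ ∑ i, f i = m}
  have hSb : BddAbove S := by
    refine ⟨∑ i : {j // j ∈ I}, n i.1, ?_⟩
    rintro _ ⟨f, hf, rfl⟩
    exact Finset.sum_le_sum fun i _ => le_of_forall_nonempty hf i
  have heS : ∑ i ∈ I, e i ∈ S :=
    ⟨fun i => e i.1, forall_nonempty_of_mDim hA he I, Finset.sum_coe_sort I e⟩
  obtain ⟨f, hf, hfS⟩ : sSup S ∈ S := Nat.sSup_mem ⟨_, heS⟩ hSb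
  -- a good type of maximal total degree is a multidimension of the projection
  have hfM : f ∈ MDim (resMap I '' X) := by
    refine mem_mDim_of_maximal hA I f hf fun i => ?_
    by_contra! hcon
    have hmem : ∑ j, Function.update f i (f i + 1) j ∈ S :=
      ⟨_, fun L => hcon L, rfl⟩
    have hle := le_csSup hSb hmem
    have hlt : ∑ j, f j < ∑ j, Function.update f i (f i + 1) j := by
      refine Finset.sum_lt_sum (fun j _ => ?_) ⟨i, Finset.mem_univ i, by simp⟩
      by_cases hj : j = i
      · subst hj; simp
      · simp [hj]
    omega
  calc ∑ i ∈ I, e i ≤ sSup S := le_csSup hSb heS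
    _ = ∑ i, f i := hfS.symm
    _ ≤ dimProj I X := by
      -- `sSup` needs a bound: multidimensions are at most `n`
      refine le_csSup ⟨∑ i : {j // j ∈ I}, n i.1, ?_⟩ ⟨f, hfM, rfl⟩
      rintro _ ⟨f', hf', rfl⟩
      exact Finset.sum_le_sum fun i _ => hf'.1 i
end

section
/- Let X be an irreducible multiprojective variety in P^{n_1} × ... × P^{n_k}. A vector e ∈ [n_·] lies in Dim(X) if and only if |e| = dim(X) and for all proper subsets I of {1,...,k}, the sum of e_i for i ∈ I is at most dim π_I(X). -/
/-!
Let `R` be the multihomogeneous coordinate ring of `X`, a domain of finite type over `ℂ`, and `K`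
its fraction field. Choose in every factor `i` a coordinate not vanishing identically on `X`; the
ratios `t i a ∈ K` of the coordinates of the `i`-th factor by the chosen one generate the function
field of `X`. For a set `I` of factors let `r I` be the transcendence degree over `ℂ` of the field
generated by the `t i a` with `i ∈ I`. As the rank of a set in the algebraic matroid of `K`, `r` is
monotone and submodular. Everything follows from the description (`MP_mdim`)

  `e ∈ Dim(X)  ↔  ∑ i, e i = r univ  and  ∑ i ∈ I, e i ≤ r I for all I`.

Indeed, a polymatroid has bases (`MP_exists_base`), so `dim X`, the total degree of the vectors of
`Dim(X)`, is `r univ` (`MP_dimOf`); and the projection `π_I(X)` has the same generic point, with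
only the coordinates in `I` remembered, so that `dim π_I(X) = r I`. Both `X` and its projections
(which are only used as images of `X`, never as closed sets) are treated at once through `MPGen`.

The description of `Dim(X)` has three ingredients.

* *Existence of intersection points* (`MP_nonempty`). Rado's theorem on independent transversals
  (`MP_rado`) turns the inequalities `∑ i ∈ I, e i ≤ r I` into a choice of `e i` ratios in the
  `i`-th factor for all `i`, such that all the chosen ratios are algebraically independent. A
  specialization argument then shows that the universal slice through the generic point of `X` is
  dominant over the space of slices (`MPF_injective`), and Chevalley's theorem together with the
  Nullstellensatz (`MP_lift_points`) gives a point of `X` on a general slice.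
* *Necessity of the inequalities, and finiteness* (`MP_hall`, `MP_generic_finite`). The universal
  slice through the generic point depends on `∑ i, e i * n i` free parameters besides the `t i a`.
  If `∑ i ∈ I, e i > r I`, then its entries in the factors `I` are too many to be algebraically
  independent, and the resulting polynomial relation holds for all slices meeting `X`
  (by the incidence principle `MP_IP`). If `∑ i, e i ≥ r univ`, the same count shows that each ratio
  of two coordinates of an intersection point is a root of a polynomial whose coefficients depend
  on the slice only, which leaves finitely many points.
* *The total degree* (`MP_notfinite`). If `∑ i, e i < r univ`, a submodularity argument
  (`MP_augment`) allows to increase some `e i` by one without violating the inequalities. A general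
  slice of type `e` then meets `X` in a set that a general further hyperplane in the `i`-th factor
  still meets, and such a set is infinite.
-/

open scoped BigOperators

open MultiProj

set_option linter.unusedSectionVars false

/-! ### Lifting complex points along dominant morphisms -/

/-- Weak Nullstellensatz: a nonzero `ℂ`-algebra of finite type has a complex point. -/
theorem MP_nullstellensatz (E : Type*) [CommRing E] [Algebra ℂ E] [Algebra.FiniteType ℂ E]
    [Nontrivial E] : Nonempty (E →ₐ[ℂ] ℂ) := by
  obtain ⟨M, hM⟩ := Ideal.exists_maximal E
  have hF : Algebra.FiniteType ℂ (E ⧸ M) := inferInstance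
  let _ : Field (E ⧸ M) := Ideal.Quotient.field M
  have : Module.Finite ℂ (E ⧸ M) := finite_of_finite_type_of_isJacobsonRing ℂ (E ⧸ M)
  have : Algebra.IsAlgebraic ℂ (E ⧸ M) := Algebra.IsAlgebraic.of_finite ℂ (E ⧸ M)
  have s : (E ⧸ M) →ₐ[ℂ] ℂ := IsAlgClosed.lift
  exact ⟨s.comp (Ideal.Quotient.mkₐ ℂ M)⟩

/-- The basic open set of `h` contains a complex point of the closed set of a prime `q ∌ h`. -/
theorem MP_exists_point {B : Type*} [CommRing B] [Algebra ℂ B] [Algebra.FiniteType ℂ B]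
    (q : Ideal B) [q.IsPrime] (h : B) (hq : h ∉ q) :
    ∃ g : B →ₐ[ℂ] ℂ, (∀ b ∈ q, g b = 0) ∧ g h ≠ 0 := by
  let D := B ⧸ q
  let h' : D := Ideal.Quotient.mk q h
  have hh : h' ≠ 0 := fun h0 => hq (Ideal.Quotient.eq_zero_iff_mem.mp h0)
  let E := Localization.Away h'
  have hfin : Algebra.FiniteType ℂ E := by
    have h1 : Algebra.FiniteType D E :=
      IsLocalization.finiteType_of_monoid_fg (Submonoid.powers h') E
    exact Algebra.FiniteType.trans (S := D) inferInstance h1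
  have hnt : Nontrivial E := by
    have : Submonoid.powers h' ≤ nonZeroDivisors D := powers_le_nonZeroDivisors_of_noZeroDivisors hh
    exact (IsLocalization.injective E this).nontrivial
  obtain ⟨s⟩ := MP_nullstellensatz E
  let g : B →ₐ[ℂ] ℂ := s.comp
    ((IsScalarTower.toAlgHom ℂ D E).comp (Ideal.Quotient.mkₐ ℂ q))
  refine ⟨g, fun b hb => ?_, ?_⟩
  · have : Ideal.Quotient.mkₐ ℂ q b = 0 := Ideal.Quotient.eq_zero_iff_mem.mpr hb
    simp only [g, AlgHom.comp_apply, this, map_zero]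
  · have : IsUnit (algebraMap D E h') := IsLocalization.Away.algebraMap_isUnit h'
    have h2 : IsUnit (s (algebraMap D E h')) := this.map _
    exact h2.ne_zero

/-- A dominant morphism of affine varieties sends the basic open set of `h ≠ 0` onto a set containing
a nonempty open subset of the target: by Chevalley the image is constructible, and it contains the
generic point. -/
theorem MP_lift_points {A B : Type*} [CommRing A] [IsDomain A] [CommRing B] [IsDomain B]
    [Algebra ℂ A] [Algebra ℂ B] [Algebra.FiniteType ℂ A] [Algebra.FiniteType ℂ B]
    (f : A →ₐ[ℂ] B) (hf : Function.Injective f) (h : B) (hh : h ≠ 0) :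
    ∃ a : A, a ≠ 0 ∧ ∀ p : A →ₐ[ℂ] ℂ, p a ≠ 0 →
      ∃ q : B →ₐ[ℂ] ℂ, (∀ x, q (f x) = p x) ∧ q h ≠ 0 := by
  have : IsNoetherianRing A := Algebra.FiniteType.isNoetherianRing ℂ A
  have hft : (f : A →+* B).FiniteType := by
    apply RingHom.FiniteType.of_comp_finiteType (f := algebraMap ℂ A)
    rw [AlgHom.comp_algebraMap_of_tower]
    exact (RingHom.finiteType_algebraMap).mpr inferInstance
  have hfp : (f : A →+* B).FinitePresentation := RingHom.FinitePresentation.of_finiteType.mp hft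
  have hc := PrimeSpectrum.isConstructible_comap_image hfp
    (PrimeSpectrum.isConstructible_basicOpen (f := h))
  obtain ⟨S, hS⟩ := PrimeSpectrum.exists_constructibleSetData_iff.mpr hc
  have hbot : (⊥ : PrimeSpectrum A) ∈ S.toSet := by
    rw [hS]
    refine ⟨⊥, ?_, ?_⟩
    · simpa using hh
    · ext x
      simp [map_eq_zero_iff f hf]
  rw [PrimeSpectrum.ConstructibleSetData.toSet] at hbot
  simp only [Set.mem_iUnion] at hbot
  obtain ⟨C, hC, hbot⟩ := hbot
  have hg : ∀ i, C.g i = 0 := by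
    intro i
    have := hbot.1 (Set.mem_range_self i)
    simpa using this
  have hf0 : C.f ≠ 0 := by
    intro h0
    exact hbot.2 (by simp [h0])
  refine ⟨C.f, hf0, fun p hp => ?_⟩
  let m : PrimeSpectrum A := ⟨RingHom.ker (p : A →+* ℂ), RingHom.ker_isPrime _⟩
  have hm : m ∈ S.toSet := by
    refine Set.mem_biUnion hC ⟨?_, ?_⟩
    · rintro _ ⟨i, rfl⟩
      rw [hg]
      exact zero_mem _
    · intro h0
      exact hp (h0 (Set.mem_singleton _))
  rw [hS] at hm
  obtain ⟨q, hq, hqm⟩ := hm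
  obtain ⟨g, hgq, hgh⟩ := MP_exists_point q.asIdeal h hq
  refine ⟨g, fun x => ?_, hgh⟩
  have hx : x - algebraMap ℂ A (p x) ∈ m.asIdeal := by
    change p _ = 0
    simp
  rw [← hqm] at hx
  have := hgq _ hx
  simpa [sub_eq_zero] using this

/-! ### Rado's theorem on independent transversals -/

/-- Rado's theorem: a finite family of finite sets `A s` has a transversal that is independent for
the rank function `r` as soon as every subfamily `I` has a union of rank at least `|I|`. The proof
shrinks the sets `A s` one element at a time. -/
theorem MP_rado {S E : Type*} [Fintype S] [DecidableEq S] [DecidableEq E] (r : Finset E → ℕ)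
    (r0 : r ∅ = 0) (mono : ∀ A B, A ⊆ B → r A ≤ r B)
    (sub : ∀ A B, r (A ∪ B) + r (A ∩ B) ≤ r A + r B) (A : S → Finset E)
    (hall : ∀ I : Finset S, I.card ≤ r (I.biUnion A)) :
    ∃ x : S → E, (∀ s, x s ∈ A s) ∧ ∀ I : Finset S, I.card ≤ r (I.image x) := by
  induction hN : ∑ s, (A s).card using Nat.strong_induction_on generalizing A with
  | _ N ih =>
  have hne : ∀ s, (A s).Nonempty := by
    intro s
    by_contra h
    have := hall {s}
    simp [Finset.not_nonempty_iff_eq_empty.mp h, r0] at this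
  by_cases hone : ∀ s, (A s).card ≤ 1
  · choose x hx using hne
    have hA : ∀ s, A s = {x s} := fun s =>
      Finset.eq_singleton_iff_unique_mem.mpr ⟨hx s, fun y hy => Finset.card_le_one.mp (hone s) _ hy _ (hx s)⟩
    refine ⟨x, hx, fun I => ?_⟩
    have := hall I
    rwa [show I.biUnion A = I.image x by ext; simp [hA, eq_comm]] at this
  push Not at hone
  obtain ⟨s, hs⟩ := hone
  obtain ⟨a, ha, b, hb, hab⟩ := Finset.one_lt_card.mp hs
  -- Deleting `c` from `A s` keeps Hall's condition unless some `I` not containing `s` is tight.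
  have key : ∀ c ∈ A s, (∃ x : S → E, (∀ s, x s ∈ A s) ∧ ∀ I : Finset S, I.card ≤ r (I.image x)) ∨
      ∃ I : Finset S, s ∉ I ∧ r (I.biUnion A ∪ (A s).erase c) ≤ I.card := by
    intro c hc
    by_cases h : ∀ I : Finset S, I.card ≤ r (I.biUnion (Function.update A s ((A s).erase c)))
    · left
      obtain ⟨x, hx, hI⟩ := ih _ (by
        rw [← hN]
        refine Finset.sum_lt_sum (fun i _ => ?_) ⟨s, Finset.mem_univ s, ?_⟩
        · by_cases his : i = s
          · subst his; simp [Finset.card_erase_le]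
          · simp [his]
        · simpa using Finset.card_erase_lt_of_mem hc) _ h rfl
      refine ⟨x, fun i => ?_, hI⟩
      by_cases his : i = s
      · subst his
        have := hx i
        simp at this
        exact this.2
      · simpa [his] using hx i
    · right
      push Not at h
      obtain ⟨I, hI⟩ := h
      have hsI : s ∈ I := by
        by_contra hsI
        rw [show I.biUnion (Function.update A s ((A s).erase c)) = I.biUnion A from
          Finset.biUnion_congr rfl fun i hi => by
            rw [Function.update_of_ne (ne_of_mem_of_not_mem hi hsI)]] at hI
        exact absurd (hall I) (by omega)
      refine ⟨I.erase s, Finset.notMem_erase s I, ?_⟩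
      have e1 : (I.erase s).biUnion A ∪ (A s).erase c
          = I.biUnion (Function.update A s ((A s).erase c)) := by
        conv_rhs => rw [← Finset.insert_erase hsI, Finset.biUnion_insert]
        rw [Function.update_self, Finset.union_comm]
        congr 1
        exact Finset.biUnion_congr rfl fun i hi => by
          rw [Function.update_of_ne (Finset.ne_of_mem_erase hi)]
      rw [e1, Finset.card_erase_of_mem hsI]
      omega
  rcases key a ha with h | ⟨I, hsI, hI⟩
  · exact h
  rcases key b hb with h | ⟨I', hsI', hI'⟩
  · exact h
  exfalso
  have h1 := sub (I.biUnion A ∪ (A s).erase a) (I'.biUnion A ∪ (A s).erase b)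
  have h2 : (insert s (I ∪ I')).card ≤
      r ((I.biUnion A ∪ (A s).erase a) ∪ (I'.biUnion A ∪ (A s).erase b)) := by
    refine (hall _).trans (mono _ _ ?_)
    intro y hy
    simp only [Finset.biUnion_insert, Finset.mem_union, Finset.mem_biUnion] at hy
    simp only [Finset.mem_union, Finset.mem_erase, Finset.mem_biUnion]
    rcases hy with hy | ⟨i, hi | hi, hy⟩
    · by_cases h : y = a
      · subst h; exact Or.inr (Or.inr ⟨hab, hy⟩)
      · exact Or.inl (Or.inr ⟨h, hy⟩)
    · exact Or.inl (Or.inl ⟨i, hi, hy⟩)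
    · exact Or.inr (Or.inl ⟨i, hi, hy⟩)
  have h3 : (I ∩ I').card ≤
      r ((I.biUnion A ∪ (A s).erase a) ∩ (I'.biUnion A ∪ (A s).erase b)) := by
    refine (hall _).trans (mono _ _ ?_)
    intro y hy
    simp only [Finset.mem_biUnion, Finset.mem_inter] at hy
    obtain ⟨i, hi, hy⟩ := hy
    simp only [Finset.mem_inter, Finset.mem_union, Finset.mem_biUnion]
    exact ⟨Or.inl ⟨i, hi.1, hy⟩, Or.inl ⟨i, hi.2, hy⟩⟩
  rw [Finset.card_insert_of_notMem (by simp [hsI, hsI'])] at h2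
  have h4 := Finset.card_union_add_card_inter I I'
  omega

/-! ### The algebraic matroid and the universal slice through a point -/

/-- Transcendence degree over `ℂ` of the field generated by a finite set, as the rank of that set in
the algebraic matroid. The value lies in `ℕ` since the rank of a finite set is finite (`MPrk_coe`). -/
noncomputable def MPrk {K : Type*} [Field K] [Algebra ℂ K] (S : Finset K) : ℕ :=
  ((AlgebraicIndependent.matroid ℂ K).eRk (S : Set K)).toNat

section
variable {K : Type*} [Field K] [Algebra ℂ K]

theorem MPrk_coe (S : Finset K) :
    (MPrk S : ℕ∞) = (AlgebraicIndependent.matroid ℂ K).eRk (S : Set K) := by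
  refine ENat.natCast_toNat (ne_top_of_le_ne_top ?_ (Matroid.eRk_le_encard _ _))
  simp

theorem MPrk_mono (A B : Finset K) (h : A ⊆ B) : MPrk A ≤ MPrk B := by
  have := (AlgebraicIndependent.matroid ℂ K).eRk_mono (Finset.coe_subset.mpr h)
  rw [← MPrk_coe, ← MPrk_coe] at this
  exact_mod_cast this

theorem MPrk_sub [DecidableEq K] (A B : Finset K) :
    MPrk (A ∪ B) + MPrk (A ∩ B) ≤ MPrk A + MPrk B := by
  have := (AlgebraicIndependent.matroid ℂ K).eRk_inter_add_eRk_union_le (A : Set K) B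
  rw [← Finset.coe_union, ← Finset.coe_inter] at this
  simp only [← MPrk_coe] at this
  have h2 : MPrk (A ∩ B) + MPrk (A ∪ B) ≤ MPrk A + MPrk B := by exact_mod_cast this
  omega

/-- A family whose image has rank at least the number of its members is algebraically independent, in
particular injective. -/
theorem MP_indep_of_card_le [DecidableEq K] {P : Type*} [Fintype P] (x : P → K)
    (h : Fintype.card P ≤ MPrk (Finset.univ.image x)) : AlgebraicIndependent ℂ x := by
  have h1 : (Set.range x).encard ≤ (AlgebraicIndependent.matroid ℂ K).eRk (Set.range x) := by
    have : (Set.range x) = ((Finset.univ.image x : Finset K) : Set K) := by simp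
    rw [this, ← MPrk_coe, Set.encard_coe_eq_coe_finsetCard]
    exact_mod_cast (Finset.card_image_le.trans h)
  have hfin : (AlgebraicIndependent.matroid ℂ K).IsRkFinite (Set.range x) :=
    Matroid.eRk_lt_top_iff.mp
      (lt_of_le_of_lt (Matroid.eRk_le_encard _ _) (Set.finite_range x).encard_lt_top)
  have hind := hfin.indep_of_encard_le_eRk h1
  have hinj : Function.Injective x := by
    have h2 : (MPrk (Finset.univ.image x)) ≤ (Finset.univ.image x).card := by
      have := Matroid.eRk_le_encard (AlgebraicIndependent.matroid ℂ K) (Finset.univ.image x : Finset K)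
      rw [← MPrk_coe, Set.encard_coe_eq_coe_finsetCard] at this
      exact_mod_cast this
    rw [← Set.injOn_univ, ← Finset.coe_univ]
    apply Finset.injOn_of_card_image_eq
    exact le_antisymm Finset.card_image_le (h.trans h2)
  rw [AlgebraicIndependent.matroid_indep_iff] at hind
  exact (algebraicIndependent_subtype_range hinj).mp hind

theorem MP_indep_set {Q : Type*} [CommRing Q] [IsDomain Q] [Algebra ℂ Q] {P : Type*} (x : P → Q)
    (h : AlgebraicIndependent ℂ x) : (AlgebraicIndependent.matroid ℂ Q).Indep (Set.range x) := by
  rw [AlgebraicIndependent.matroid_indep_iff]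
  exact h.coe_range

/-- If the algebraically independent elements `g p` of an extension of `K` are polynomials in the
elements of `S ⊆ K` and of `Y`, then their number is at most `MPrk S + |Y|`. -/
theorem MP_card_le {Q : Type*} [CommRing Q] [IsDomain Q] [Algebra ℂ Q]
    (C : K →ₐ[ℂ] Q) (S : Finset K) (Y : Finset Q)
    {P : Type*} [Fintype P] (g : P → Q) (hg : AlgebraicIndependent ℂ g)
    (hmem : ∀ p, g p ∈ Algebra.adjoin ℂ (C '' (S : Set K) ∪ Y)) :
    Fintype.card P ≤ MPrk S + Y.card := by
  let N := AlgebraicIndependent.matroid ℂ Q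
  have h1 : (Set.range g).encard ≤ N.eRk (C '' (S : Set K) ∪ Y) := by
    rw [← Matroid.eRk_closure_eq]
    refine (MP_indep_set g hg).encard_le_eRk_of_subset ?_
    rintro _ ⟨p, rfl⟩
    rw [AlgebraicIndependent.matroid_closure_eq]
    exact isAlgebraic_algebraMap (A := Q) (⟨g p, hmem p⟩ : Algebra.adjoin ℂ _)
  have h2 : N.eRk (C '' (S : Set K)) ≤ MPrk S := by
    rw [MPrk_coe, Matroid.eRk_le_iff]
    intro I hI hind
    obtain ⟨B, hB, rfl⟩ := (Set.subset_image_iff).mp hI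
    have hCinj : Function.Injective C := C.toRingHom.injective
    rw [hCinj.encard_image]
    refine Matroid.Indep.encard_le_eRk_of_subset ?_ hB
    rw [AlgebraicIndependent.matroid_indep_iff] at hind ⊢
    have h3 := (algebraicIndependent_image (R := ℂ) (f := C) (s := B) hCinj.injOn).mpr hind
    exact AlgebraicIndependent.of_comp C h3
  have h3 : (Set.range g).encard = Fintype.card P := by
    rw [← Set.image_univ, hg.injective.encard_image, Set.encard_univ]
    simp
  rw [h3] at h1
  have h4 : N.eRk (C '' (S : Set K) ∪ Y) ≤ MPrk S + Y.card := by
    refine (Matroid.eRk_union_le_eRk_add_encard _ _ _).trans ?_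
    rw [Set.encard_coe_eq_coe_finsetCard]
    gcongr
  exact_mod_cast h1.trans h4

/-- The rank does not increase when adding an algebraic element. -/
theorem MPrk_insert [DecidableEq K] (S : Finset K) (a : K)
    (h : IsAlgebraic (Algebra.adjoin ℂ (S : Set K)) a) : MPrk (insert a S) = MPrk S := by
  have h1 : a ∈ (AlgebraicIndependent.matroid ℂ K).closure S := by
    rw [AlgebraicIndependent.matroid_closure_eq]; exact h
  have : (MPrk (insert a S) : ℕ∞) = MPrk S := by
    rw [MPrk_coe, MPrk_coe, Finset.coe_insert, ← Matroid.eRk_insert_closure_eq,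
      Set.insert_eq_of_mem h1, Matroid.eRk_closure_eq]
  exact_mod_cast this
end

/-- Indices of the coefficients of a slice of type `e`: the coefficient of the `a`-th coordinate in
the `k`-th linear form of the `j`-th factor is indexed by `⟨j, (k, a)⟩`. -/
abbrev MPV {J : Type*} (m e : J → ℕ) := (j : J) × (Fin (e j) × Fin (m j + 1))

section
variable {J : Type*} [Fintype J] [DecidableEq J] {m : J → ℕ} {K : Type*} [Field K] [Algebra ℂ K]
  [DecidableEq K]

/-- The finite set of all coordinates `t j a` of the factors `j ∈ I`. -/
def MPT (t : ∀ j, Fin (m j + 1) → K) (I : Finset J) : Finset K :=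
  I.biUnion fun j => Finset.univ.image (t j)

theorem MP_mem_T (t : ∀ j, Fin (m j + 1) → K) (I : Finset J) (x : K) :
    x ∈ MPT t I ↔ ∃ j ∈ I, ∃ a, t j a = x := by
  simp [MPT]

open MvPolynomial in
/-- The coefficients of the universal slice of type `e` through the point with coordinates `t`, which
is normalized by `t j (φ j) = 1`: in each form all coefficients but that of the coordinate `φ j` are
free parameters, and the latter is determined by the vanishing of the form at `t`. -/
noncomputable def MPG (t : ∀ j, Fin (m j + 1) → K) (φ : ∀ j, Fin (m j + 1)) (e : J → ℕ)
    (p : MPV m e) : MvPolynomial (MPV m e) K :=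
  if p.2.2 = φ p.1 then
    - ∑ b ∈ Finset.univ.erase (φ p.1), C (t p.1 b) * X ⟨p.1, (p.2.1, b)⟩ else X p

/-- Every slice through the point `t` is a specialization of the universal one. -/
theorem MPG_aeval (t : ∀ j, Fin (m j + 1) → K) (φ : ∀ j, Fin (m j + 1)) (ht : ∀ j, t j (φ j) = 1)
    (e : J → ℕ) (L : MPV m e → K) (hL : ∀ j k, ∑ a, L ⟨j, (k, a)⟩ * t j a = 0) (p : MPV m e) :
    MvPolynomial.aeval L (MPG t φ e p) = L p := by
  obtain ⟨j, k, a⟩ := p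
  unfold MPG
  split_ifs with h
  · dsimp at h
    subst h
    have := hL j k
    rw [← Finset.add_sum_erase _ _ (Finset.mem_univ (φ j)), ht, mul_one] at this
    simp only [map_neg, map_sum, map_mul, MvPolynomial.aeval_X, MvPolynomial.aeval_C,
      Algebra.algebraMap_self, RingHom.id_apply]
    rw [eq_comm, eq_neg_iff_add_eq_zero]
    simpa only [mul_comm] using this
  · simp

/-- The coefficients of the universal slice in the factors `I` are polynomials in the coordinates
`t j a` and in the free parameters. -/
theorem MPG_mem (t : ∀ j, Fin (m j + 1) → K) (φ : ∀ j, Fin (m j + 1)) (e : J → ℕ)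
    (I : Finset J) (S : Finset K) (hS : MPT t I ⊆ S) (p : MPV m e) (hp : p.1 ∈ I) :
    MPG t φ e p ∈ Algebra.adjoin ℂ ((Algebra.ofId K (MvPolynomial (MPV m e) K)).restrictScalars ℂ
      '' (S : Set K) ∪ (((I.sigma fun j => (Finset.univ : Finset (Fin (e j))) ×ˢ
        (Finset.univ.erase (φ j))).image
          (fun p : MPV m e => (MvPolynomial.X p : MvPolynomial (MPV m e) K)) :
            Finset (MvPolynomial (MPV m e) K)) : Set (MvPolynomial (MPV m e) K))) := by
  have hX : ∀ (b) (hb : b ≠ φ p.1), (MvPolynomial.X ⟨p.1, (p.2.1, b)⟩ : MvPolynomial (MPV m e) K) ∈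
    Algebra.adjoin ℂ ((Algebra.ofId K (MvPolynomial (MPV m e) K)).restrictScalars ℂ
      '' (S : Set K) ∪ (((I.sigma fun j => (Finset.univ : Finset (Fin (e j))) ×ˢ
        (Finset.univ.erase (φ j))).image
          (fun p : MPV m e => (MvPolynomial.X p : MvPolynomial (MPV m e) K)) :
            Finset (MvPolynomial (MPV m e) K)) : Set (MvPolynomial (MPV m e) K))) := by
    intro b hb
    refine Algebra.subset_adjoin (Or.inr ?_)
    rw [Finset.mem_coe, Finset.mem_image]
    refine ⟨⟨p.1, (p.2.1, b)⟩, ?_, rfl⟩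
    simp [hp, hb]
  unfold MPG
  split_ifs with h
  · refine neg_mem (sum_mem fun b hb => mul_mem ?_ (hX b (Finset.ne_of_mem_erase hb)))
    refine Algebra.subset_adjoin (Or.inl ⟨t p.1 b, hS ?_, rfl⟩)
    exact (MP_mem_T t I _).mpr ⟨_, hp, _, rfl⟩
  · exact hX p.2.2 h

theorem MP_cardY (φ : ∀ j, Fin (m j + 1)) (e : J → ℕ) (I : Finset J) {Q : Type*} [DecidableEq Q]
    (f : MPV m e → Q) :
    ((I.sigma fun j => (Finset.univ : Finset (Fin (e j))) ×ˢ
        (Finset.univ.erase (φ j))).image f).card ≤ ∑ j ∈ I, e j * m j := by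
  refine Finset.card_image_le.trans ?_
  simp [Finset.card_sigma, Finset.card_product]

/-- If the coefficients of the universal slice are algebraically independent, then
`∑ j ∈ I, e j` is bounded by the rank of the coordinates in `I`: the factors `I` carry
`∑ j ∈ I, e j * (m j + 1)` coefficients but only `∑ j ∈ I, e j * m j` free parameters. -/
theorem MPG_E (t : ∀ j, Fin (m j + 1) → K) (φ : ∀ j, Fin (m j + 1)) (e : J → ℕ)
    (h : AlgebraicIndependent ℂ (MPG t φ e)) (I : Finset J) :
    ∑ j ∈ I, e j ≤ MPrk (MPT t I) := by
  classical
  have h1 := MP_card_le ((Algebra.ofId K (MvPolynomial (MPV m e) K)).restrictScalars ℂ)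
    (MPT t I) _ (fun p : {p : MPV m e // p ∈ I.sigma fun _ => Finset.univ} => MPG t φ e p.1)
    (h.comp _ Subtype.val_injective)
    (fun p => MPG_mem t φ e I (MPT t I) subset_rfl p.1 (Finset.mem_sigma.mp p.2).1)
  have h2 := MP_cardY φ e I (fun p : MPV m e => (MvPolynomial.X p : MvPolynomial (MPV m e) K))
  rw [Fintype.card_coe, Finset.card_sigma] at h1
  simp only [Finset.card_univ, Fintype.card_prod, Fintype.card_fin, mul_add, mul_one,
    Finset.sum_add_distrib] at h1
  omega

/-- The coefficients of the universal slice in the factors `I` are polynomials in any `S ⊇ MPT t I`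
and at most `∑ j ∈ I, e j * m j` further elements, independent of `S`. -/
theorem MPG_exY (t : ∀ j, Fin (m j + 1) → K) (φ : ∀ j, Fin (m j + 1)) (e : J → ℕ)
    (I : Finset J) : ∃ Y : Finset (MvPolynomial (MPV m e) K), Y.card ≤ ∑ j ∈ I, e j * m j ∧
      ∀ S : Finset K, MPT t I ⊆ S → ∀ p : MPV m e, p.1 ∈ I → MPG t φ e p ∈ Algebra.adjoin ℂ
        ((Algebra.ofId K (MvPolynomial (MPV m e) K)).restrictScalars ℂ '' (S : Set K) ∪ Y) := by
  classical
  exact ⟨_, MP_cardY φ e I _, fun S hS p hp => MPG_mem t φ e I S hS p hp⟩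

/-- If `∑ j, e j` is at least the rank of all the coordinates, the coefficients of the universal
slice together with an element `τ` algebraic over the coordinates are algebraically dependent. -/
theorem MPG_F (t : ∀ j, Fin (m j + 1) → K) (φ : ∀ j, Fin (m j + 1)) (e : J → ℕ)
    (he : MPrk (MPT t Finset.univ) ≤ ∑ j, e j) (τ : K)
    (hτ : IsAlgebraic (Algebra.adjoin ℂ (MPT t Finset.univ : Set K)) τ) :
    ¬ AlgebraicIndependent ℂ (fun o : Option (MPV m e) =>
      o.elim (MvPolynomial.C τ) (MPG t φ e)) := by
  intro h
  obtain ⟨Y, h2, hY⟩ := MPG_exY t φ e Finset.univ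
  have h1 := MP_card_le ((Algebra.ofId K (MvPolynomial (MPV m e) K)).restrictScalars ℂ)
    (insert τ (MPT t Finset.univ)) Y _ h ?_
  · rw [MPrk_insert _ _ hτ, Fintype.card_option, Fintype.card_sigma] at h1
    simp only [Fintype.card_prod, Fintype.card_fin, mul_add, mul_one,
      Finset.sum_add_distrib] at h1
    omega
  · rintro (_ | p)
    · exact Algebra.subset_adjoin (Or.inl ⟨τ, by simp, rfl⟩)
    · exact hY _ (Finset.subset_insert _ _) p (Finset.mem_univ _)

theorem MPG_dep {P : Type*} {Q : Type*} [CommRing Q] [Algebra ℂ Q] (g : P → Q)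
    (h : ¬ AlgebraicIndependent ℂ g) :
    ∃ f : MvPolynomial P ℂ, f ≠ 0 ∧ MvPolynomial.aeval g f = 0 := by
  rw [algebraicIndependent_iff] at h
  push Not at h
  obtain ⟨f, h1, h2⟩ := h
  exact ⟨f, h2, h1⟩

/-- If `∑ j ∈ I, e j` exceeds the rank of the coordinates in `I`, the coefficients of all slices
through `t` satisfy a common nontrivial polynomial relation over `ℂ`. -/
theorem MP_relE (t : ∀ j, Fin (m j + 1) → K) (φ : ∀ j, Fin (m j + 1)) (ht : ∀ j, t j (φ j) = 1)
    (e : J → ℕ) (I : Finset J) (hI : MPrk (MPT t I) < ∑ j ∈ I, e j) :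
    ∃ f : MvPolynomial (MPV m e) ℂ, f ≠ 0 ∧ ∀ L : MPV m e → K,
      (∀ j k, ∑ a, L ⟨j, (k, a)⟩ * t j a = 0) → MvPolynomial.aeval L f = 0 := by
  obtain ⟨f, h1, h2⟩ := MPG_dep _ (fun h => absurd (MPG_E t φ e h I) (by omega))
  refine ⟨f, h1, fun L hL => ?_⟩
  have h3 : (MvPolynomial.aeval L).restrictScalars ℂ (MvPolynomial.aeval (MPG t φ e) f) = 0 := by
    rw [h2, map_zero]
  rw [← AlgHom.comp_apply, MvPolynomial.comp_aeval] at h3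
  simpa [MPG_aeval t φ ht e L hL] using h3

/-- If `∑ j, e j` is at least the rank of all the coordinates, an element `τ` algebraic over them is
a root of a nonzero polynomial whose coefficients are polynomials in the coefficients of the slice,
uniformly for all slices through `t`. -/
theorem MP_relF (t : ∀ j, Fin (m j + 1) → K) (φ : ∀ j, Fin (m j + 1)) (ht : ∀ j, t j (φ j) = 1)
    (e : J → ℕ) (he : MPrk (MPT t Finset.univ) ≤ ∑ j, e j) (τ : K)
    (hτ : IsAlgebraic (Algebra.adjoin ℂ (MPT t Finset.univ : Set K)) τ) :
    ∃ f : Polynomial (MvPolynomial (MPV m e) ℂ), f ≠ 0 ∧ ∀ L : MPV m e → K,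
      (∀ j k, ∑ a, L ⟨j, (k, a)⟩ * t j a = 0) →
        Polynomial.eval₂ (MvPolynomial.aeval L : MvPolynomial (MPV m e) ℂ →ₐ[ℂ] K) τ f = 0 := by
  obtain ⟨f, h1, h2⟩ := MPG_dep _ (MPG_F t φ e he τ hτ)
  refine ⟨MvPolynomial.optionEquivLeft ℂ _ f, by simpa using h1, fun L hL => ?_⟩
  have h3 : (MvPolynomial.aeval L).restrictScalars ℂ (MvPolynomial.aeval (fun o : Option (MPV m e) =>
      o.elim (MvPolynomial.C τ) (MPG t φ e)) f) = 0 := by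
    rw [h2, map_zero]
  rw [← AlgHom.comp_apply, MvPolynomial.comp_aeval] at h3
  rw [← h3]
  let Ψ : MvPolynomial (Option (MPV m e)) ℂ →ₐ[ℂ] K :=
    (Polynomial.aevalTower (MvPolynomial.aeval L : MvPolynomial (MPV m e) ℂ →ₐ[ℂ] K) τ).comp
      (MvPolynomial.optionEquivLeft ℂ (MPV m e)).toAlgHom
  refine Eq.trans (show _ = Ψ f from rfl) ?_
  congr 1
  ext o
  cases o with
  | none => simp [Ψ, MvPolynomial.optionEquivLeft_X_none]
  | some p => simpa [Ψ] using (MPG_aeval t φ ht e L hL p).symm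
end

/-! ### Specialization of algebraically independent families -/

theorem MP_update_indep {K P : Type*} [Field K] [Algebra ℂ K] [DecidableEq P]
    (y : P → K) (hy : AlgebraicIndependent ℂ y) (p : P) (v : K)
    (hv : Transcendental (Algebra.adjoin ℂ (y '' {p}ᶜ)) v) :
    AlgebraicIndependent ℂ (Function.update y p v) := by
  rw [AlgebraicIndependent.iff_transcendental_adjoin_image p]
  have h1 := (AlgebraicIndependent.iff_transcendental_adjoin_image p).mp hy
  constructor
  · convert h1.1 using 2 with j
    exact Function.update_of_ne j.2 _ _
  · have : Function.update y p v '' {p}ᶜ = y '' {p}ᶜ :=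
      Set.image_congr fun j hj => Function.update_of_ne hj _ _
    rw [this, Function.update_self]
    exact hv

/-- If some choice `x p (u p)` of one element from each of the families `x p` is algebraically
independent, then every nonempty open set of coefficients contains linear combinations of the
families that are algebraically independent. -/
theorem MP_dense {K P : Type*} [Field K] [Algebra ℂ K] [Fintype P] {n : P → Type*}
    [∀ p, Fintype (n p)]
    (x : ∀ p, n p → K) (u : ∀ p, n p) (hu : AlgebraicIndependent ℂ (fun p => x p (u p)))
    (U : Set (∀ p, n p → ℂ)) (hU : IsOpen U) (hne : U.Nonempty) :
    ∃ c ∈ U, AlgebraicIndependent ℂ (fun p => ∑ a, c p a • x p a) := by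
  classical
  suffices h : ∀ s : Finset P, ∃ c ∈ U, AlgebraicIndependent ℂ
      (fun p => if p ∈ s then ∑ a, c p a • x p a else x p (u p)) by
    simpa using h Finset.univ
  intro s
  induction s using Finset.induction_on with
  | empty => obtain ⟨c, hc⟩ := hne; exact ⟨c, hc, by simpa using hu⟩
  | insert p s hp ih =>
    obtain ⟨c, hc, hi⟩ := ih
    set y : P → K := (fun p => if p ∈ s then ∑ a, c p a • x p a else x p (u p)) with hy
    have hyp : y p = x p (u p) := by simp [hy, hp]
    have key : ∃ z : n p → ℂ, Function.update c p z ∈ U ∧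
        Transcendental (Algebra.adjoin ℂ (y '' {p}ᶜ)) (∑ a, z a • x p a) := by
      by_cases h0 : Transcendental (Algebra.adjoin ℂ (y '' {p}ᶜ)) (∑ a, c p a • x p a)
      · exact ⟨c p, by simpa using hc, h0⟩
      · have hcont : Continuous (fun ε : ℂ =>
            Function.update c p (c p + ε • (Pi.single (u p) 1 : n p → ℂ))) := by
          fun_prop
        have h1 : ∀ᶠ ε in nhdsWithin (0 : ℂ) {0}ᶜ, Function.update c p
            (c p + ε • (Pi.single (u p) 1 : n p → ℂ)) ∈ U := by
          apply (hcont.tendsto 0).mono_left nhdsWithin_le_nhds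
          apply hU.mem_nhds
          simpa using hc
        obtain ⟨ε, h2, h3⟩ := (h1.and self_mem_nhdsWithin).exists
        refine ⟨_, h2, fun h4 => ?_⟩
        -- Two combinations that differ by `ε • x p (u p)` cannot both be algebraic over the rest.
        have h5 : IsAlgebraic (Algebra.adjoin ℂ (y '' {p}ᶜ)) (∑ a, c p a • x p a) := by
          simpa [Transcendental] using h0
        have h6 : ∑ a, (c p + ε • (Pi.single (u p) 1 : n p → ℂ)) a • x p a =
            ∑ a, c p a • x p a + ε • x p (u p) := by
          simp [add_smul, Finset.sum_add_distrib, Pi.single_apply]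
        rw [h6] at h4
        have h7 := h4.sub h5
        rw [add_sub_cancel_left] at h7
        have h8 := h7.mul (isAlgebraic_algebraMap (A := K)
          (algebraMap ℂ (Algebra.adjoin ℂ (y '' {p}ᶜ)) ε⁻¹))
        rw [← IsScalarTower.algebraMap_apply, Algebra.smul_def, mul_right_comm, ← map_mul,
          mul_inv_cancel₀ h3, map_one, one_mul, ← hyp] at h8
        exact ((AlgebraicIndependent.iff_transcendental_adjoin_image p).mp hi).2 h8
    obtain ⟨z, hz, hz2⟩ := key
    refine ⟨_, hz, ?_⟩
    convert MP_update_indep y hi p _ hz2 using 2 with q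
    by_cases hq : q = p
    · subst hq; simp
    · simp [hq, hy]

/-! ### Slices, representatives and the incidence principle -/

/-- `v` is a system of homogeneous coordinates of the point `w` of multiprojective space. -/
def MPRep {J : Type*} {m : J → ℕ} (v : ∀ j, Fin (m j + 1) → ℂ) (w : PStack m) : Prop :=
  ∀ j, ∃ hv : v j ≠ 0, Projectivization.mk ℂ (v j) hv = w j

theorem MP_exists_rep {J : Type*} {m : J → ℕ} (w : PStack m) : ∃ v, MPRep v w :=
  ⟨fun j => (w j).rep, fun j => ⟨(w j).rep_nonzero, (w j).mk_rep⟩⟩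

/-- The coefficients of a slice as a single family. -/
def MPflat {J : Type*} {m e : J → ℕ} (L : SliceParams m e) (p : MPV m e) : ℂ :=
  L p.1 p.2.1 p.2.2

theorem MP_mem_slice {J : Type*} {m e : J → ℕ} (L : SliceParams m e) (w : PStack m)
    (v : ∀ j, Fin (m j + 1) → ℂ) (hv : MPRep v w) :
    w ∈ SliceZeros L ↔ ∀ j k, ∑ a, MPflat L ⟨j, (k, a)⟩ * v j a = 0 := by
  constructor
  · intro h j k
    obtain ⟨h1, h2⟩ := hv j
    exact h j k (v j) h1 h2
  · intro h j k u hu hu2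
    obtain ⟨h1, h2⟩ := hv j
    rw [← h2, Projectivization.mk_eq_mk_iff] at hu2
    obtain ⟨c, rfl⟩ := hu2
    have := h j k
    simp only [Pi.smul_apply, Units.smul_def, smul_eq_mul, mul_left_comm, ← Finset.mul_sum]
    rw [mul_eq_zero]
    exact Or.inr this

/-- The slices at which a nonzero polynomial does not vanish form a dense open set. Density is seen
on the line joining a given slice to one at which the polynomial does not vanish. -/
theorem MP_generic {J : Type*} [Fintype J] {m e : J → ℕ} (f : MvPolynomial (MPV m e) ℂ) (hf : f ≠ 0) :
    IsOpen {L : SliceParams m e | MvPolynomial.eval (MPflat L) f ≠ 0} ∧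
    Dense {L : SliceParams m e | MvPolynomial.eval (MPflat L) f ≠ 0} := by
  have hcont : Continuous fun L : SliceParams m e => MvPolynomial.eval (MPflat L) f := by
    refine (MvPolynomial.continuous_eval f).comp ?_
    unfold MPflat
    fun_prop
  refine ⟨isOpen_ne_fun hcont continuous_const, ?_⟩
  obtain ⟨M, hM⟩ : ∃ M : MPV m e → ℂ, MvPolynomial.eval M f ≠ 0 := by
    by_contra! h
    exact hf (MvPolynomial.funext fun x => by rw [h x, map_zero])
  intro L
  let q : Polynomial ℂ := MvPolynomial.aeval
    (fun p => Polynomial.C (MPflat L p) + Polynomial.X * Polynomial.C (M p - MPflat L p)) f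
  have hq : ∀ s : ℂ, q.eval s = MvPolynomial.eval (fun p => MPflat L p + s * (M p - MPflat L p)) f := by
    intro s
    have : (Polynomial.aeval s) q = MvPolynomial.aeval
        (fun p => MPflat L p + s * (M p - MPflat L p)) f := by
      simp only [q]
      rw [← AlgHom.comp_apply, MvPolynomial.comp_aeval]
      simp
    simpa [Polynomial.coe_aeval_eq_eval, MvPolynomial.aeval_eq_eval] using this
  have hq0 : q ≠ 0 := by
    intro h
    have := hq 1
    rw [h] at this
    simp at this
    exact hM this.symm
  have h1 : ∀ᶠ s in nhdsWithin (0 : ℂ) {0}ᶜ, q.eval s ≠ 0 := by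
    have : ∀ᶠ s in Filter.cofinite, q.eval s ≠ 0 := by
      rw [Filter.eventually_cofinite]
      refine (q.rootSet_finite ℂ).subset ?_
      intro s hs
      simp only [not_not, Set.mem_ofPred_eq] at hs
      rw [Polynomial.mem_rootSet]
      exact ⟨hq0, by simpa [Polynomial.coe_aeval_eq_eval] using hs⟩
    exact this.filter_mono (nhdsNE_le_cofinite 0)
  let γ : ℂ → SliceParams m e := fun s j k a => L j k a + s * (M ⟨j, (k, a)⟩ - L j k a)
  have hγ : Filter.Tendsto γ (nhdsWithin (0 : ℂ) {0}ᶜ) (nhds L) := by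
    have h2 : Continuous γ := by unfold γ; fun_prop
    have h3 : γ 0 = L := by funext j k a; simp [γ]
    have := h2.tendsto 0
    rw [h3] at this
    exact this.mono_left nhdsWithin_le_nhds
  refine mem_closure_of_tendsto hγ (h1.mono fun s hs => ?_)
  rw [hq] at hs
  exact hs

/-- Evaluation at `y` after substituting polynomials `N p` in `Y` for the first group of variables. -/
theorem MP_aeval_subst {V Y A : Type*} [CommRing A] [Algebra ℂ A] (y : Y → A)
    (N : V → MvPolynomial Y ℂ) (H : MvPolynomial (V ⊕ Y) ℂ) :
    MvPolynomial.aeval y (MvPolynomial.aeval (Sum.elim N MvPolynomial.X) H) =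
      MvPolynomial.aeval (Sum.elim (fun p => MvPolynomial.aeval y (N p)) y) H := by
  rw [← AlgHom.comp_apply, MvPolynomial.comp_aeval]
  congr 2
  funext o
  cases o <;> simp

/-- Incidence principle. Let every polynomial relation between the coordinates `x` hold on `W`. A
polynomial `H` in the coefficients of a slice and the coordinates of a point that vanishes at `(L, x)`
for all slices `L` through `x` vanishes at `(L, w)` for every `w ∈ W` and every slice `L` through `w`.
The slice `L` is spread out to a slice `N` through the generic point that is polynomial in the
coordinates, using forms `c j` that take the value `1` at `w`. -/
theorem MP_IP {J : Type*} {m e : J → ℕ} {W : Set (PStack m)} {K : Type*} [Field K]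
    [Algebra ℂ K] (x : ∀ j, Fin (m j + 1) → K)
    (van : ∀ g : MvPolynomial ((j : J) × Fin (m j + 1)) ℂ,
      MvPolynomial.aeval (fun p => x p.1 p.2) g = 0 → ∀ w ∈ W, PolyVanish g w)
    (H : MvPolynomial (MPV m e ⊕ ((j : J) × Fin (m j + 1))) ℂ)
    (hH : ∀ L : MPV m e → K, (∀ j k, ∑ a, L ⟨j, (k, a)⟩ * x j a = 0) →
      MvPolynomial.aeval (Sum.elim L (fun p => x p.1 p.2)) H = 0)
    (w : PStack m) (hw : w ∈ W) (v : ∀ j, Fin (m j + 1) → ℂ) (hv : MPRep v w) (L : MPV m e → ℂ)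
    (hL : ∀ j k, ∑ a, L ⟨j, (k, a)⟩ * v j a = 0) :
    MvPolynomial.eval (Sum.elim L (fun p => v p.1 p.2)) H = 0 := by
  classical
  have hc : ∀ j, ∃ c : Fin (m j + 1) → ℂ, ∑ a, c a * v j a = 1 := by
    intro j
    obtain ⟨h1, -⟩ := hv j
    obtain ⟨a, ha⟩ := Function.ne_iff.mp h1
    refine ⟨Pi.single a (v j a)⁻¹, ?_⟩
    rw [Finset.sum_eq_single a] <;> simp +contextual
    exact inv_mul_cancel₀ ha
  choose c hc using hc
  let Q := MvPolynomial ((j : J) × Fin (m j + 1)) ℂ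
  let N : MPV m e → Q := fun p =>
    (∑ b, MvPolynomial.C (c p.1 b) * MvPolynomial.X ⟨p.1, b⟩) * MvPolynomial.C (L p) -
    (∑ b, MvPolynomial.C (L ⟨p.1, (p.2.1, b)⟩) * MvPolynomial.X ⟨p.1, b⟩) *
      MvPolynomial.C (c p.1 p.2.2)
  let g : Q := MvPolynomial.aeval (Sum.elim N MvPolynomial.X) H
  have h1 : MvPolynomial.aeval (fun p => x p.1 p.2) g = 0 := by
    rw [MP_aeval_subst]
    apply hH
    intro j k
    have e1 : ∀ a, MvPolynomial.aeval (fun p : (j : J) × Fin (m j + 1) => x p.1 p.2)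
        (N ⟨j, (k, a)⟩) =
        (∑ b, algebraMap ℂ K (c j b) * x j b) * algebraMap ℂ K (L ⟨j, (k, a)⟩) -
        (∑ b, algebraMap ℂ K (L ⟨j, (k, b)⟩) * x j b) * algebraMap ℂ K (c j a) := by
      intro a
      simp only [N, map_sub, map_mul, map_sum, MvPolynomial.aeval_C, MvPolynomial.aeval_X]
    simp only [e1, sub_mul, Finset.sum_sub_distrib, mul_assoc]
    rw [← Finset.mul_sum, ← Finset.mul_sum, sub_eq_zero]
    exact mul_comm _ _
  have h2 := van g h1 w hw v hv
  rw [← MvPolynomial.aeval_eq_eval] at h2 ⊢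
  have h3 := MP_aeval_subst (fun p => v p.1 p.2) N H
  rw [← h2]
  refine Eq.trans ?_ h3.symm
  congr 2
  funext o
  cases o with
  | inr q => rfl
  | inl p =>
    obtain ⟨j, k, a⟩ := p
    simp [N, hc, hL]

/-! ### Necessity of the rank inequalities, and generic finiteness -/

/-- The coordinates `x`, normalized so that the coordinate `φ j` of the `j`-th factor is `1`. -/
def MPt {J : Type*} {m : J → ℕ} {K : Type*} [Field K] (x : ∀ j, Fin (m j + 1) → K)
    (φ : ∀ j, Fin (m j + 1)) : ∀ j, Fin (m j + 1) → K := fun j a => x j a / x j (φ j)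

theorem MP_ortho {J : Type*} {m : J → ℕ} {K : Type*} [Field K] {x : ∀ j, Fin (m j + 1) → K}
    {φ : ∀ j, Fin (m j + 1)} (j : J) (l : Fin (m j + 1) → K)
    (h : ∑ a, l a * x j a = 0) : ∑ a, l a * MPt x φ j a = 0 := by
  simp only [MPt, mul_div_assoc', ← Finset.sum_div, h, zero_div]

section
variable {J : Type*} [Fintype J] [DecidableEq J] {m : J → ℕ} {W : Set (PStack m)} {K : Type*}
  [Field K] [Algebra ℂ K] [DecidableEq K] {x : ∀ j, Fin (m j + 1) → K}
  {φ : ∀ j, Fin (m j + 1)}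

/-- If a general slice of type `e` meets `W`, the rank inequality holds for every set of factors `I`.
Here `x` is a generic point of `W` with values in `K`. -/
theorem MP_hall (hφ : ∀ j, x j (φ j) ≠ 0)
    (van : ∀ g : MvPolynomial ((j : J) × Fin (m j + 1)) ℂ,
      MvPolynomial.aeval (fun p => x p.1 p.2) g = 0 → ∀ w ∈ W, PolyVanish g w)
    (e : J → ℕ) (hgen : Generic (fun L : SliceParams m e => (W ∩ SliceZeros L).Nonempty))
    (I : Finset J) : ∑ j ∈ I, e j ≤ MPrk (MPT (MPt x φ) I) := by
  by_contra hI
  push Not at hI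
  obtain ⟨f, hf, hf2⟩ := MP_relE (MPt x φ) φ (fun j => div_self (hφ j)) e I hI
  obtain ⟨U, hU, hUd, hUW⟩ := hgen
  obtain ⟨ho, hd⟩ := MP_generic f hf
  obtain ⟨L, hL, hLU⟩ := hd.inter_open_nonempty U hU (hUd.nonempty)
  obtain ⟨w, hw, hws⟩ := hUW L hL
  obtain ⟨v, hv⟩ := MP_exists_rep w
  have := MP_IP x van (MvPolynomial.rename Sum.inl f) (fun M hM => by
    rw [MvPolynomial.aeval_rename]
    exact hf2 _ fun j k => MP_ortho j (fun a => M ⟨j, (k, a)⟩) (hM j k)) w hw v hv (MPflat L)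
      ((MP_mem_slice L w v hv).mp hws)
  rw [MvPolynomial.eval_rename] at this
  exact hLU this

/-- Dehomogenization of a binary form. -/
theorem MP_homog {A : Type*} [Field A] (D : ℕ) (c : ℕ → A) (y z : A) (hz : z ≠ 0) :
    ∑ r ∈ Finset.range (D + 1), c r * y ^ r * z ^ (D - r) =
      z ^ D * ∑ r ∈ Finset.range (D + 1), c r * (y / z) ^ r := by
  rw [Finset.mul_sum]
  refine Finset.sum_congr rfl fun r hr => ?_
  have : D = (D - r) + r := by have := Finset.mem_range.mp hr; omega
  conv_rhs => rw [this]
  rw [div_pow, pow_add]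
  field_simp

/-- If `∑ j, e j` is at least the rank of all coordinates, then on a general slice the ratio of any two
coordinates of one factor takes finitely many values on `W`. -/
theorem MP_coord_finite (hφ : ∀ j, x j (φ j) ≠ 0)
    (van : ∀ g : MvPolynomial ((j : J) × Fin (m j + 1)) ℂ,
      MvPolynomial.aeval (fun p => x p.1 p.2) g = 0 → ∀ w ∈ W, PolyVanish g w)
    (e : J → ℕ) (he : MPrk (MPT (MPt x φ) Finset.univ) ≤ ∑ j, e j)
    (i : J) (a b : Fin (m i + 1)) :
    ∃ f : MvPolynomial (MPV m e) ℂ, f ≠ 0 ∧ ∀ L : SliceParams m e,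
      MvPolynomial.eval (MPflat L) f ≠ 0 → ∃ F : Set ℂ, F.Finite ∧ ∀ w ∈ W ∩ SliceZeros L,
        ∀ v, MPRep v w → v i a ≠ 0 → v i b / v i a ∈ F := by
  by_cases ha : x i a = 0
  · refine ⟨1, one_ne_zero, fun L _ => ⟨∅, Set.finite_empty, fun w hw v hv h0 => ?_⟩⟩
    have := van (MvPolynomial.X ⟨i, a⟩) (by simpa using ha) w hw.1 v hv
    simp at this
    exact absurd this h0
  let T := MPT (MPt x φ) Finset.univ
  have hmem : ∀ c, IsAlgebraic (Algebra.adjoin ℂ (T : Set K)) (MPt x φ i c) := fun c =>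
    isAlgebraic_algebraMap (A := K)
      (⟨_, Algebra.subset_adjoin ((MP_mem_T _ _ _).mpr ⟨i, Finset.mem_univ _, c, rfl⟩)⟩ :
        Algebra.adjoin ℂ (T : Set K))
  have hτ : IsAlgebraic (Algebra.adjoin ℂ (T : Set K)) (x i b / x i a) := by
    have h1 : x i b / x i a = MPt x φ i b * (MPt x φ i a)⁻¹ := by
      have := hφ i
      simp only [MPt]
      field_simp
    rw [h1]
    exact (hmem b).mul (hmem a).inv
  obtain ⟨g, hg, hg2⟩ := MP_relF (MPt x φ) φ (fun j => div_self (hφ j)) e he _ hτ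
  refine ⟨g.leadingCoeff, by simpa using hg, fun L hL => ?_⟩
  let gL : Polynomial ℂ := g.map (MvPolynomial.eval (MPflat L))
  have hgL : gL ≠ 0 := by
    intro h
    apply hL
    have := congrArg (fun q => Polynomial.coeff q g.natDegree) h
    simpa [gL] using this
  refine ⟨{z | gL.eval z = 0}, ?_, ?_⟩
  · refine (gL.rootSet_finite ℂ).subset fun s hs => ?_
    rw [Polynomial.mem_rootSet]
    exact ⟨hgL, by simpa [Polynomial.coe_aeval_eq_eval] using hs⟩
  intro w hw v hv h0
  let D := g.natDegree
  let H : MvPolynomial (MPV m e ⊕ ((j : J) × Fin (m j + 1))) ℂ :=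
    ∑ r ∈ Finset.range (D + 1), MvPolynomial.rename Sum.inl (g.coeff r) *
      MvPolynomial.X (Sum.inr ⟨i, b⟩) ^ r * MvPolynomial.X (Sum.inr ⟨i, a⟩) ^ (D - r)
  have h1 := MP_IP x van H (fun M hM => by
    have h2 := hg2 M fun j k => MP_ortho j (fun a => M ⟨j, (k, a)⟩) (hM j k)
    rw [Polynomial.eval₂_eq_sum_range] at h2
    simp only [H, map_sum, map_mul, map_pow, MvPolynomial.aeval_rename, MvPolynomial.aeval_X,
      Sum.elim_inr, Sum.elim_comp_inl]
    rw [MP_homog _ _ _ _ ha]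
    exact mul_eq_zero_of_right _ h2) w hw.1 v hv (MPflat L) ((MP_mem_slice L w v hv).mp hw.2)
  simp only [H, map_sum, map_mul, map_pow, MvPolynomial.eval_rename, MvPolynomial.eval_X,
      Sum.elim_inr, Sum.elim_comp_inl] at h1
  rw [MP_homog _ _ _ _ h0] at h1
  have h3 := (mul_eq_zero.mp h1).resolve_left (pow_ne_zero _ h0)
  change (g.map _).eval _ = 0
  rw [Polynomial.eval_map, Polynomial.eval₂_eq_sum_range]
  exact h3

theorem MP_finite_of_ratios {W : Set (PStack m)} (F : ∀ i, Fin (m i + 1) → Fin (m i + 1) → Set ℂ)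
    (hF : ∀ i a b, (F i a b).Finite)
    (h : ∀ w ∈ W, ∀ v, MPRep v w → ∀ i a b, v i a ≠ 0 → v i b / v i a ∈ F i a b) : W.Finite := by
  let G : ∀ i, Set (Projectivization ℂ (Fin (m i + 1) → ℂ)) := fun i =>
    ⋃ a, Set.range (fun u : {u // u ∈ Set.univ.pi (F i a) ∧ u ≠ 0} => Projectivization.mk ℂ u.1 u.2.2)
  have hG : ∀ i, (G i).Finite := by
    intro i
    refine Set.finite_iUnion fun a => ?_
    have : Finite {u // u ∈ Set.univ.pi (F i a) ∧ u ≠ 0} :=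
      Set.Finite.to_subtype (s := {u | u ∈ Set.univ.pi (F i a) ∧ u ≠ 0})
        ((Set.Finite.pi fun b => hF i a b).subset fun u hu => hu.1)
    exact Set.finite_range _
  refine (Set.Finite.pi hG).subset fun w hw i _ => ?_
  obtain ⟨v, hv⟩ := MP_exists_rep w
  obtain ⟨h1, h2⟩ := hv i
  obtain ⟨a, ha⟩ := Function.ne_iff.mp h1
  have ha' : v i a ≠ 0 := ha
  refine Set.mem_iUnion.mpr ⟨a, ⟨⟨fun b => v i b / v i a, fun b _ => h w hw v hv i a b ha', ?_⟩, ?_⟩⟩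
  · refine Function.ne_iff.mpr ⟨a, ?_⟩
    simp [ha']
  · rw [← h2, Projectivization.mk_eq_mk_iff']
    refine ⟨(v i a)⁻¹, ?_⟩
    funext b
    simp [div_eq_inv_mul]

theorem MP_generic_finite (hφ : ∀ j, x j (φ j) ≠ 0)
    (van : ∀ g : MvPolynomial ((j : J) × Fin (m j + 1)) ℂ,
      MvPolynomial.aeval (fun p => x p.1 p.2) g = 0 → ∀ w ∈ W, PolyVanish g w)
    (e : J → ℕ) (he : MPrk (MPT (MPt x φ) Finset.univ) ≤ ∑ j, e j) :
    Generic (fun L : SliceParams m e => (W ∩ SliceZeros L).Finite) := by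
  choose f hf hf2 using MP_coord_finite hφ van e he
  have hp : (∏ i, ∏ a, ∏ b, f i a b) ≠ 0 := by
    simp only [Finset.prod_ne_zero_iff]
    intros; exact hf _ _ _
  obtain ⟨ho, hd⟩ := MP_generic _ hp
  refine ⟨_, ho, hd, fun L hL => ?_⟩
  simp only [map_prod] at hL
  have hL' : ∀ i a b, MvPolynomial.eval (MPflat L) (f i a b) ≠ 0 := by
    intro i a b
    exact Finset.prod_ne_zero_iff.mp (Finset.prod_ne_zero_iff.mp (Finset.prod_ne_zero_iff.mp hL
      i (Finset.mem_univ _)) a (Finset.mem_univ _)) b (Finset.mem_univ _)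
  choose F hF hF2 using fun i a b => hf2 i a b L (hL' i a b)
  exact MP_finite_of_ratios F hF fun w hw v hv i a b h0 => hF2 i a b w hw v hv h0
end

/-! ### Generic points and existence of intersection points -/

/-- `W` has the generic point `ξ` with values in the `ℂ`-algebra `R`, in a form that applies to
images of varieties as well: the complex points of `Spec R` outside `h = 0` specialize `ξ` to points
of `W`, and every polynomial relation between the coordinates of `ξ` holds on `W`. -/
structure MPGen {J : Type*} {m : J → ℕ} (W : Set (PStack m)) {R : Type*} [CommRing R] [Algebra ℂ R]
    (ξ : ∀ j, Fin (m j + 1) → R) (h : R) : Prop where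
  h0 : h ≠ 0
  pt : ∀ p : R →ₐ[ℂ] ℂ, p h ≠ 0 → ∃ w ∈ W, MPRep (fun j a => p (ξ j a)) w
  van : ∀ g : MvPolynomial ((j : J) × Fin (m j + 1)) ℂ,
      MvPolynomial.aeval (fun p => ξ p.1 p.2) g = 0 → ∀ w ∈ W, PolyVanish g w

section
open MvPolynomial
variable {J : Type*} [Fintype J] [DecidableEq J] {m : J → ℕ} {W : Set (PStack m)} {R : Type*}
  [CommRing R] [IsDomain R] [Algebra ℂ R] {ξ : ∀ j, Fin (m j + 1) → R} {h : R}
  {φ : ∀ j, Fin (m j + 1)}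

/-- Restriction of functions from the space of slices to the slices through `ξ`, parametrized
without denominators: the form `ℓ` is sent to `ξ j (φ j) • ℓ`, with its `φ j`-th coefficient
corrected by `-ℓ(ξ j)`, which is a form vanishing at `ξ j`. -/
noncomputable def MPF (ξ : ∀ j, Fin (m j + 1) → R) (φ : ∀ j, Fin (m j + 1)) (e : J → ℕ) :
    MvPolynomial (MPV m e) ℂ →ₐ[ℂ] MvPolynomial (MPV m e) R :=
  aeval fun p => C (ξ p.1 (φ p.1)) * X p -
    if p.2.2 = φ p.1 then ∑ b, C (ξ p.1 b) * X ⟨p.1, (p.2.1, b)⟩ else 0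

theorem MPF_ortho (ξ : ∀ j, Fin (m j + 1) → R) (φ : ∀ j, Fin (m j + 1)) (e : J → ℕ) (j : J)
    (k : Fin (e j)) : ∑ a, MPF ξ φ e (X ⟨j, (k, a)⟩) * C (ξ j a) = 0 := by
  have : ∀ a, MPF ξ φ e (X ⟨j, (k, a)⟩) = C (ξ j (φ j)) * X ⟨j, (k, a)⟩ -
      if a = φ j then ∑ b, C (ξ j b) * X ⟨j, (k, b)⟩ else 0 := by
    intro a
    simp only [MPF, aeval_X]
  simp only [this, sub_mul, Finset.sum_sub_distrib, ite_mul, zero_mul, Finset.sum_ite_eq',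
    Finset.mem_univ, if_true]
  rw [sub_eq_zero, Finset.sum_mul]
  refine Finset.sum_congr rfl fun a _ => ?_
  ring

/-- Relations between the slices through `ξ` survive the following specialization: the forms with
constant coefficients `c p`, shifted in the coefficient `φ j` by the value of the form at the
normalized coordinates. -/
theorem MPF_shift {K : Type*} [Field K] [Algebra ℂ K] [Algebra R K] [IsScalarTower ℂ R K]
    (hφ : ∀ j, algebraMap R K (ξ j (φ j)) ≠ 0) (e : J → ℕ)
    (c : ∀ p : (j : J) × Fin (e j), Fin (m p.1 + 1) → ℂ) (f : MvPolynomial (MPV m e) ℂ)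
    (hf : MPF ξ φ e f = 0) :
    aeval (fun p : (j : J) × Fin (e j) =>
        ∑ a, c p a • MPt (fun j a => algebraMap R K (ξ j a)) φ p.1 a)
      (aeval (fun p : MPV m e => (C (c ⟨p.1, p.2.1⟩ p.2.2) -
        if p.2.2 = φ p.1 then X ⟨p.1, p.2.1⟩ else 0 :
          MvPolynomial ((j : J) × Fin (e j)) ℂ)) f) = 0 := by
  have h2 : (aeval (fun p : MPV m e => algebraMap ℂ K (c ⟨p.1, p.2.1⟩ p.2.2) /
      algebraMap R K (ξ p.1 (φ p.1))) : MvPolynomial (MPV m e) R →ₐ[R] K).restrictScalars ℂ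
      (MPF ξ φ e f) = 0 := by rw [hf, map_zero]
  rw [MPF, ← AlgHom.comp_apply, comp_aeval] at h2
  rw [← AlgHom.comp_apply, comp_aeval, ← h2]
  congr 2
  funext p
  obtain ⟨j, k, a⟩ := p
  have := hφ j
  dsimp only
  split_ifs with hif
  · subst hif
    simp only [map_sub, AlgHom.coe_restrictScalars', map_mul, map_sum, aeval_C, aeval_X]
    rw [mul_div_cancel₀ _ this]
    congr 1
    refine Finset.sum_congr rfl fun b _ => ?_
    simp only [MPt]
    rw [Algebra.smul_def]
    ring
  · simp only [map_sub, AlgHom.coe_restrictScalars', map_mul, aeval_C, aeval_X, map_zero]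
    rw [mul_div_cancel₀ _ this]

/-- The constants provided by `MP_dense` can be taken outside the zero locus of a given polynomial. -/
theorem MP_dense_poly {K : Type*} [Field K] [Algebra ℂ K] (t : ∀ j, Fin (m j + 1) → K) (e : J → ℕ)
    (u : ∀ p : (j : J) × Fin (e j), Fin (m p.1 + 1))
    (hu : AlgebraicIndependent ℂ (fun p => t p.1 (u p)))
    (f : MvPolynomial (MPV m e) ℂ) (hf : f ≠ 0) :
    ∃ c : ∀ p : (j : J) × Fin (e j), Fin (m p.1 + 1) → ℂ,
      eval (fun p : MPV m e => c ⟨p.1, p.2.1⟩ p.2.2) f ≠ 0 ∧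
      AlgebraicIndependent ℂ (fun p => ∑ a, c p a • t p.1 a) := by
  obtain ⟨-, hd⟩ := MP_generic f hf
  obtain ⟨L, hL⟩ := hd.nonempty
  let U : Set (∀ p : (j : J) × Fin (e j), Fin (m p.1 + 1) → ℂ) :=
    {c | eval (fun p : MPV m e => c ⟨p.1, p.2.1⟩ p.2.2) f ≠ 0}
  have hcont : Continuous fun c : (∀ p : (j : J) × Fin (e j), Fin (m p.1 + 1) → ℂ) =>
      eval (fun p : MPV m e => c ⟨p.1, p.2.1⟩ p.2.2) f := by
    refine (MvPolynomial.continuous_eval f).comp ?_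
    fun_prop
  have hU : IsOpen U := isOpen_ne_fun hcont continuous_const
  have hne : U.Nonempty := ⟨fun p => L p.1 p.2, hL⟩
  exact MP_dense (fun p : (j : J) × Fin (e j) => t p.1) u hu U hU hne

/-- If `e j` of the ratios of coordinates of each factor `j` can be chosen so that all of them are
algebraically independent, then the slices through `ξ` are dominant over the space of all slices.
For a relation `f` choose constants `c` with `f c ≠ 0` and such that the forms `c` take
algebraically independent values at `ξ`; the relation given by `MPF_shift` is then trivial, and
setting its variables to `0` yields `f c = 0`. -/
theorem MPF_injective {K : Type*} [Field K] [Algebra ℂ K] [Algebra R K] [IsScalarTower ℂ R K]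
    (hφ : ∀ j, algebraMap R K (ξ j (φ j)) ≠ 0) (e : J → ℕ)
    (u : ∀ p : (j : J) × Fin (e j), Fin (m p.1 + 1))
    (hu : AlgebraicIndependent ℂ (fun p =>
      MPt (fun j a => algebraMap R K (ξ j a)) φ p.1 (u p))) :
    Function.Injective (MPF ξ φ e) := by
  rw [injective_iff_map_eq_zero]
  intro f hf
  by_contra hf0
  obtain ⟨c, hc, hind⟩ := MP_dense_poly (MPt (fun j a => algebraMap R K (ξ j a)) φ) e u hu f hf0
  rw [algebraicIndependent_iff] at hind
  have h3 := hind _ (MPF_shift hφ e c f hf)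
  have h4 := congrArg (aeval (fun _ => (0 : ℂ))) h3
  rw [← AlgHom.comp_apply, comp_aeval, map_zero] at h4
  apply hc
  rw [← aeval_eq_eval]
  rw [← h4]
  congr 2
  funext p
  simp [apply_ite]

/-- If `e j` of the ratios of coordinates of each factor `j` can be chosen so that all of them are
algebraically independent, a general slice of type `e` meets `W`. -/
theorem MP_nonempty [Algebra.FiniteType ℂ R] {K : Type*} [Field K] [Algebra ℂ K] [Algebra R K]
    [IsScalarTower ℂ R K] (hW : MPGen W ξ h) (hφ : ∀ j, algebraMap R K (ξ j (φ j)) ≠ 0)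
    (e : J → ℕ)
    (u : ∀ p : (j : J) × Fin (e j), Fin (m p.1 + 1))
    (hu : AlgebraicIndependent ℂ (fun p =>
      MPt (fun j a => algebraMap R K (ξ j a)) φ p.1 (u p))) :
    Generic (fun L : SliceParams m e => (W ∩ SliceZeros L).Nonempty) := by
  obtain ⟨a, ha, hlift⟩ := MP_lift_points (MPF ξ φ e) (MPF_injective hφ e u hu) (C h)
    (by simpa using hW.h0)
  obtain ⟨ho, hd⟩ := MP_generic a ha
  refine ⟨_, ho, hd, fun L hL => ?_⟩
  obtain ⟨q, hq, hqh⟩ := hlift (aeval (MPflat L)) (by simpa [aeval_eq_eval] using hL)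
  let p : R →ₐ[ℂ] ℂ := q.comp ((Algebra.ofId R (MvPolynomial (MPV m e) R)).restrictScalars ℂ)
  obtain ⟨w, hw, hv⟩ := hW.pt p hqh
  refine ⟨w, hw, (MP_mem_slice L w _ hv).mpr fun j k => ?_⟩
  have := congrArg q (MPF_ortho ξ φ e j k)
  rw [map_sum, map_zero] at this
  rw [← this]
  refine Finset.sum_congr rfl fun b _ => ?_
  rw [map_mul, hq, aeval_X]
  rfl
end

/-! ### Polymatroid bases and the description of `MDim` -/

section polym
variable {J : Type*} [Fintype J] [DecidableEq J]

/-- A vector satisfying the rank inequalities whose total is smaller than `r univ` can be increased in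
one coordinate. Otherwise every coordinate lies in a tight set; tight sets are closed under unions. -/
theorem MP_augment (r : Finset J → ℕ) (r0 : r ∅ = 0)
    (sub : ∀ A B, r (A ∪ B) + r (A ∩ B) ≤ r A + r B)
    (e : J → ℕ) (he : ∀ I, ∑ j ∈ I, e j ≤ r I) (hlt : ∑ j, e j < r Finset.univ) :
    ∃ i, ∀ I, ∑ j ∈ I, Function.update e i (e i + 1) j ≤ r I := by
  by_contra! hcon
  have h1 : ∀ i, ∃ I, i ∈ I ∧ ∑ j ∈ I, e j = r I := by
    intro i
    obtain ⟨I, hI⟩ := hcon i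
    have h2 := he I
    by_cases hi : i ∈ I
    · refine ⟨I, hi, ?_⟩
      rw [← Finset.add_sum_erase _ _ hi, Function.update_self] at hI
      rw [← Finset.add_sum_erase _ _ hi] at h2 ⊢
      have : ∑ j ∈ I.erase i, Function.update e i (e i + 1) j = ∑ j ∈ I.erase i, e j :=
        Finset.sum_congr rfl fun j hj => Function.update_of_ne (Finset.ne_of_mem_erase hj) _ _
      omega
    · have : ∑ j ∈ I, Function.update e i (e i + 1) j = ∑ j ∈ I, e j :=
        Finset.sum_congr rfl fun j hj => Function.update_of_ne (ne_of_mem_of_not_mem hj hi) _ _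
      omega
  choose T hT hT2 using h1
  have h3 : ∀ s : Finset J, ∑ j ∈ s.biUnion T, e j = r (s.biUnion T) := by
    intro s
    induction s using Finset.induction_on with
    | empty => simp [r0]
    | insert i s _ ih =>
      rw [Finset.biUnion_insert]
      have a1 := sub (T i) (s.biUnion T)
      have a2 := Finset.sum_union_inter (s₁ := T i) (s₂ := s.biUnion T) (f := e)
      have a3 := he (T i ∪ s.biUnion T)
      have a4 := he (T i ∩ s.biUnion T)
      have a5 := hT2 i
      omega
  have h4 : (Finset.univ : Finset J).biUnion T = Finset.univ :=
    Finset.eq_univ_of_forall fun i => Finset.mem_biUnion.mpr ⟨i, Finset.mem_univ _, hT i⟩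
  have := h3 Finset.univ
  rw [h4] at this
  omega

/-- A polymatroid has integral bases. -/
theorem MP_exists_base (r : Finset J → ℕ) (r0 : r ∅ = 0)
    (sub : ∀ A B, r (A ∪ B) + r (A ∩ B) ≤ r A + r B) :
    ∃ e : J → ℕ, (∀ I, ∑ j ∈ I, e j ≤ r I) ∧ ∑ j, e j = r Finset.univ := by
  suffices h : ∀ k ≤ r Finset.univ, ∃ e : J → ℕ, (∀ I, ∑ j ∈ I, e j ≤ r I) ∧ ∑ j, e j = k from
    h _ le_rfl
  intro k
  induction k with
  | zero => exact fun _ => ⟨0, by simp, by simp⟩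
  | succ k ih =>
    intro hk
    obtain ⟨e, he, hek⟩ := ih (by omega)
    obtain ⟨i, hi⟩ := MP_augment r r0 sub e he (by omega)
    refine ⟨_, hi, ?_⟩
    rw [← Finset.add_sum_erase _ _ (Finset.mem_univ i), Function.update_self]
    have : ∑ j ∈ Finset.univ.erase i, Function.update e i (e i + 1) j =
        ∑ j ∈ Finset.univ.erase i, e j :=
      Finset.sum_congr rfl fun j hj => Function.update_of_ne (Finset.ne_of_mem_erase hj) _ _
    rw [← Finset.add_sum_erase _ _ (Finset.mem_univ i)] at hek
    omega
end polym

section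
variable {J : Type*} [Fintype J] [DecidableEq J] {m : J → ℕ} {K : Type*}
  [Field K] [Algebra ℂ K] [DecidableEq K] (t : ∀ j, Fin (m j + 1) → K)

theorem MPrk_le_card (S : Finset K) : MPrk S ≤ S.card := by
  have := Matroid.eRk_le_encard (AlgebraicIndependent.matroid ℂ K) (S : Set K)
  rw [← MPrk_coe, Set.encard_coe_eq_coe_finsetCard] at this
  exact_mod_cast this

theorem MPrkT_empty : MPrk (MPT t ∅) = 0 := by
  have := MPrk_le_card (MPT t ∅)
  simpa [MPT] using this

theorem MPrkT_sub (A B : Finset J) : MPrk (MPT t (A ∪ B)) + MPrk (MPT t (A ∩ B)) ≤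
    MPrk (MPT t A) + MPrk (MPT t B) := by
  have h1 := MPrk_sub (MPT t A) (MPT t B)
  have h2 : MPT t (A ∪ B) = MPT t A ∪ MPT t B := by
    simp only [MPT, Finset.union_biUnion]
  have h3 : MPT t (A ∩ B) ⊆ MPT t A ∩ MPT t B := by
    intro z hz
    obtain ⟨j, hj, a, rfl⟩ := (MP_mem_T _ _ _).mp hz
    rw [Finset.mem_inter] at hj ⊢
    exact ⟨(MP_mem_T _ _ _).mpr ⟨j, hj.1, a, rfl⟩, (MP_mem_T _ _ _).mpr ⟨j, hj.2, a, rfl⟩⟩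
  have h4 := MPrk_mono _ _ h3
  rw [h2]
  omega

/-- The rank of a single factor is at most its dimension, as one of the coordinates is `1`. -/
theorem MPrkT_single (φ : ∀ j, Fin (m j + 1)) (ht : ∀ j, t j (φ j) = 1) (j : J) :
    MPrk (MPT t {j}) ≤ m j := by
  have h1 : MPT t {j} = insert 1 ((Finset.univ.erase (φ j)).image (t j)) := by
    rw [← ht j, ← Finset.image_insert, Finset.insert_erase (Finset.mem_univ _)]
    simp [MPT]
  rw [h1, MPrk_insert _ _ isAlgebraic_one]
  refine (MPrk_le_card _).trans (Finset.card_image_le.trans ?_)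
  simp

/-- The rank inequalities allow to choose `e j` coordinates in each factor `j` in an algebraically
independent way. -/
theorem MP_ind_of_hall (e : J → ℕ) (he : ∀ I, ∑ j ∈ I, e j ≤ MPrk (MPT t I)) :
    ∃ u : ∀ p : (j : J) × Fin (e j), Fin (m p.1 + 1),
      AlgebraicIndependent ℂ (fun p => t p.1 (u p)) := by
  obtain ⟨y, hy, hy2⟩ := MP_rado (S := (j : J) × Fin (e j)) (E := K) MPrk
    (by simpa using MPrk_le_card (∅ : Finset K)) (fun A B h => MPrk_mono A B h)
    (fun A B => MPrk_sub A B) (fun p => Finset.univ.image (t p.1)) (by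
      intro I
      have h1 : (I.biUnion fun p => Finset.univ.image (t p.1)) = MPT t (I.image Sigma.fst) := by
        simp [MPT, Finset.image_biUnion]
      rw [h1]
      refine le_trans ?_ (he _)
      have h2 : I ⊆ (I.image Sigma.fst).sigma fun _ => Finset.univ := by
        intro p hp
        simpa using ⟨p.2, hp⟩
      refine (Finset.card_le_card h2).trans ?_
      simp [Finset.card_sigma])
  have h3 : ∀ p, ∃ a, t p.1 a = y p := fun p => by simpa using hy p
  choose u hu using h3
  refine ⟨u, ?_⟩
  simp only [hu]
  exact MP_indep_of_card_le y (by simpa using hy2 Finset.univ)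
end

theorem MP_generic_and {α : Type*} [TopologicalSpace α] {P Q : α → Prop} (hP : Generic P)
    (hQ : Generic Q) : Generic fun a => P a ∧ Q a := by
  obtain ⟨U, hU, hd, h⟩ := hP
  obtain ⟨U', hU', hd', h'⟩ := hQ
  exact ⟨U ∩ U', hU.inter hU', hd.inter_of_isOpen_left hd' hU, fun a ha => ⟨h a ha.1, h' a ha.2⟩⟩

theorem MP_hyperplane_dense {n : ℕ} (v : Fin (n + 1) → ℂ) (hv : v ≠ 0) :
    IsOpen {l : Fin (n + 1) → ℂ | ∑ a, l a * v a ≠ 0} ∧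
    Dense {l : Fin (n + 1) → ℂ | ∑ a, l a * v a ≠ 0} := by
  refine ⟨isOpen_ne_fun (by fun_prop) continuous_const, ?_⟩
  let f : (Fin (n + 1) → ℂ) →ₗ[ℂ] ℂ := ∑ a, v a • LinearMap.proj a
  have hf : ∀ l, f l = ∑ a, l a * v a := fun l => by simp [f, mul_comm]
  have h1 : {l : Fin (n + 1) → ℂ | ∑ a, l a * v a ≠ 0} = (f.ker : Set (Fin (n + 1) → ℂ))ᶜ := by
    ext l; simp [hf]
  rw [h1, ← interior_eq_empty_iff_dense_compl]
  by_contra hne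
  have h2 := Submodule.eq_top_of_nonempty_interior' f.ker (Set.nonempty_iff_ne_empty.mpr hne)
  obtain ⟨a, ha⟩ := Function.ne_iff.mp hv
  have h3 : Pi.single a 1 ∈ f.ker := h2 ▸ Submodule.mem_top
  rw [LinearMap.mem_ker, hf] at h3
  simp [Pi.single_apply] at h3
  exact ha h3

/-- The slice `L` with the form `l` added as last form of the `i`-th factor. -/
def MPext {J : Type*} [DecidableEq J] {m e : J → ℕ} (i : J) (L : SliceParams m e)
    (l : Fin (m i + 1) → ℂ) :
    SliceParams m (Function.update e i (e i + 1)) := fun j k =>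
  if h : k.1 < e j then L j ⟨k, h⟩ else if hj : i = j then hj ▸ l else 0

theorem MP_le_update {J : Type*} [DecidableEq J] (e : J → ℕ) (i j : J) :
    e j ≤ Function.update e i (e i + 1) j := by
  by_cases hj : j = i
  · subst hj; simp
  · simp [hj]

/-- The slice obtained by forgetting the last form of the `i`-th factor. -/
def MPres {J : Type*} [DecidableEq J] {m e : J → ℕ} (i : J)
    (L : SliceParams m (Function.update e i (e i + 1))) : SliceParams m e := fun j k =>
  L j ⟨k.1, k.2.trans_le (MP_le_update e i j)⟩

/-- If general slices of type `e` meet `W` in finitely many points, general slices with one more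
hyperplane in the `i`-th factor do not meet `W`: a general hyperplane avoids finitely many points. -/
theorem MP_notfinite {J : Type*} [Fintype J] [DecidableEq J] {m e : J → ℕ} {W : Set (PStack m)}
    (h1 : Generic (fun L : SliceParams m e => (W ∩ SliceZeros L).Finite)) (i : J)
    (h2 : Generic (fun L : SliceParams m (Function.update e i (e i + 1)) =>
      (W ∩ SliceZeros L).Nonempty)) : False := by
  obtain ⟨U, hU, hUd, hUW⟩ := h1
  obtain ⟨U', hU', hUd', hUW'⟩ := h2
  have hres : Continuous (MPres (m := m) (e := e) i) := by
    refine continuous_pi fun j => continuous_pi fun k => ?_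
    have h1 : Continuous fun L : SliceParams m (Function.update e i (e i + 1)) => L j :=
      continuous_apply j
    exact continuous_pi_iff.mp h1 _
  have hlast : e i < Function.update e i (e i + 1) i := by simp
  have hre : ∀ (L : SliceParams m e) l, MPres i (MPext i L l) = L := by
    intro L l; funext j k; simp [MPres, MPext]
  have her : ∀ L : SliceParams m (Function.update e i (e i + 1)),
      MPext i (MPres i L) (L i ⟨e i, hlast⟩) = L := by
    intro L; funext j k
    unfold MPext MPres
    split_ifs with h h'
    · rfl
    · subst h'
      have : k = ⟨e i, hlast⟩ := by
        ext
        have := k.2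
        simp only [Function.update_self] at this
        simp only
        omega
      rw [this]
    · exact absurd (k.2.trans_eq (Function.update_of_ne (Ne.symm h') _ _)) h
  obtain ⟨L0, hL0⟩ := hUd.nonempty
  obtain ⟨L', hL'1, hL'2⟩ := hUd'.inter_open_nonempty _ (hU.preimage hres)
    ⟨MPext i L0 0, by rw [Set.mem_preimage, hre]; exact hL0⟩
  set L := MPres i L' with hL
  have hfin := hUW L hL'1
  have hext : Continuous fun l => MPext i L l := by
    unfold MPext
    refine continuous_pi fun j => continuous_pi fun k => ?_
    split_ifs with h h'
    · exact continuous_const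
    · subst h'; exact continuous_id
    · exact continuous_const
  choose v hv using fun w : PStack m => MP_exists_rep w
  have hd := dense_biInter_of_isOpen (S := W ∩ SliceZeros L)
    (f := fun w => {l : Fin (m i + 1) → ℂ | ∑ a, l a * v w i a ≠ 0})
    (fun w _ => (MP_hyperplane_dense (v w i) (hv w i).1).1) hfin.countable
    (fun w _ => (MP_hyperplane_dense (v w i) (hv w i).1).2)
  obtain ⟨l, hl, hl2⟩ := hd.inter_open_nonempty _ (hU'.preimage hext)
    ⟨L' i ⟨e i, hlast⟩, by rw [Set.mem_preimage, her]; exact hL'2⟩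
  obtain ⟨w, hw, hws⟩ := hUW' _ hl
  have hwL : w ∈ SliceZeros L := by
    rw [← hre L l]
    exact fun j k => hws j _
  have h3 := Set.mem_iInter₂.mp hl2 w ⟨hw, hwL⟩
  apply h3
  have h4 := hws i ⟨e i, hlast⟩ (v w i) (hv w i).1 (hv w i).2
  simpa [MPext] using h4

section
variable {J : Type*} [Fintype J] [DecidableEq J] {m : J → ℕ} {K : Type*} [Field K] [Algebra ℂ K]
  [DecidableEq K]

/-- Transcendence degree over `ℂ` of the ratios of coordinates of the factors in `I`. It does not
depend on the choice `φ` of nonzero denominators. -/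
noncomputable def MPdim (x : ∀ j, Fin (m j + 1) → K) (φ : ∀ j, Fin (m j + 1)) (I : Finset J) : ℕ :=
  MPrk (MPT (MPt x φ) I)

variable {W : Set (PStack m)} {R : Type*}
  [CommRing R] [IsDomain R] [Algebra ℂ R] [Algebra.FiniteType ℂ R] [Algebra R K]
  [IsScalarTower ℂ R K] [FaithfulSMul R K]
  {ξ : ∀ j, Fin (m j + 1) → R} {h : R} {φ : ∀ j, Fin (m j + 1)}

theorem MP_van (hW : MPGen W ξ h) (g : MvPolynomial ((j : J) × Fin (m j + 1)) ℂ)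
    (hg : MvPolynomial.aeval (fun p => algebraMap R K (ξ p.1 p.2)) g = 0) :
    ∀ w ∈ W, PolyVanish g w := by
  apply hW.van
  have := MvPolynomial.aeval_algebraMap_apply K
    (fun p : (j : J) × Fin (m j + 1) => ξ p.1 p.2) g
  rw [← FaithfulSMul.algebraMap_eq_zero_iff R K, ← this]
  exact hg

/-- The multidimension is the set of bases of the polymatroid of the generic point. -/
theorem MP_mdim (hW : MPGen W ξ h) (hφ : ∀ j, algebraMap R K (ξ j (φ j)) ≠ 0) (e : J → ℕ) :
    e ∈ MDim W ↔
      ∑ j, e j = MPdim (fun j a => algebraMap R K (ξ j a)) φ Finset.univ ∧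
        ∀ I, ∑ j ∈ I, e j ≤ MPdim (fun j a => algebraMap R K (ξ j a)) φ I := by
  have van' := MP_van (K := K) hW
  have hne : ∀ e : J → ℕ,
      (∀ I, ∑ j ∈ I, e j ≤ MPdim (fun j a => algebraMap R K (ξ j a)) φ I) →
      Generic (fun L : SliceParams m e => (W ∩ SliceZeros L).Nonempty) := by
    intro e he
    obtain ⟨u, hu⟩ := MP_ind_of_hall (MPt (fun j a => algebraMap R K (ξ j a)) φ) e he
    exact MP_nonempty (φ := φ) hW hφ e u hu
  constructor
  · rintro ⟨-, hgen⟩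
    have hhall : ∀ I, ∑ j ∈ I, e j ≤ MPdim (fun j a => algebraMap R K (ξ j a)) φ I :=
      MP_hall (x := fun j a => algebraMap R K (ξ j a)) (φ := φ) hφ van' e (by
        obtain ⟨U, hU, hd, hh⟩ := hgen
        exact ⟨U, hU, hd, fun a ha => (hh a ha).2⟩)
    refine ⟨?_, hhall⟩
    by_contra hlt
    obtain ⟨i, hi⟩ := MP_augment (MPdim (fun j a => algebraMap R K (ξ j a)) φ)
      (MPrkT_empty _) (MPrkT_sub _) e hhall (lt_of_le_of_ne (hhall _) hlt)
    refine MP_notfinite (W := W) ?_ i (hne _ hi)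
    obtain ⟨U, hU, hd, hh⟩ := hgen
    exact ⟨U, hU, hd, fun a ha => (hh a ha).1⟩
  · rintro ⟨hs, hh⟩
    refine ⟨fun j => ?_, MP_generic_and (MP_generic_finite (x := fun j a => algebraMap R K (ξ j a)) (φ := φ) hφ van' e hs.ge) (hne e hh)⟩
    have h1 := hh {j}
    rw [Finset.sum_singleton] at h1
    exact h1.trans (MPrkT_single (MPt (fun j a => algebraMap R K (ξ j a)) φ) φ
      (fun j => div_self (hφ j)) j)

theorem MP_dimOf (hW : MPGen W ξ h) (hφ : ∀ j, algebraMap R K (ξ j (φ j)) ≠ 0) :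
    dimOf W = MPdim (fun j a => algebraMap R K (ξ j a)) φ Finset.univ := by
  obtain ⟨e, he, hs⟩ := MP_exists_base (MPdim (fun j a => algebraMap R K (ξ j a)) φ)
    (MPrkT_empty _) (MPrkT_sub _)
  have : {k | ∃ e ∈ MDim W, ∑ i, e i = k} =
      {MPdim (fun j a => algebraMap R K (ξ j a)) φ Finset.univ} := by
    ext k
    rw [Set.mem_singleton_iff]
    constructor
    · rintro ⟨e, he, rfl⟩
      exact ((MP_mdim hW hφ e).mp he).1
    · rintro rfl
      exact ⟨e, (MP_mdim hW hφ e).mpr ⟨hs, he⟩, hs⟩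
  unfold dimOf
  rw [this, csSup_singleton]
end

/-! ### The generic point of an irreducible variety and its projections -/

section
variable {J : Type*} {m : J → ℕ}

theorem MPRep.smul {v : ∀ j, Fin (m j + 1) → ℂ} {w : PStack m} (hv : MPRep v w) (c : J → ℂ)
    (hc : ∀ j, c j ≠ 0) : MPRep (fun j a => c j * v j a) w := by
  intro j
  obtain ⟨h1, h2⟩ := hv j
  refine ⟨smul_ne_zero (hc j) h1, ?_⟩
  rw [← h2, Projectivization.mk_eq_mk_iff']
  exact ⟨c j, rfl⟩

/-- Two systems of homogeneous coordinates of a point differ by a rescaling of each factor. -/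
theorem MPRep.unique {v v' : ∀ j, Fin (m j + 1) → ℂ} {w : PStack m} (hv : MPRep v w)
    (hv' : MPRep v' w) : ∃ c : J → ℂ, (∀ j, c j ≠ 0) ∧ v' = fun j a => c j * v j a := by
  have : ∀ j, ∃ c : ℂ, c ≠ 0 ∧ v' j = c • v j := by
    intro j
    obtain ⟨h1, h2⟩ := hv j
    obtain ⟨h3, h4⟩ := hv' j
    rw [← h2, Projectivization.mk_eq_mk_iff] at h4
    obtain ⟨c, hc⟩ := h4
    exact ⟨c, c.ne_zero, hc.symm⟩
  choose c hc hcv using this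
  exact ⟨c, hc, funext fun j => hcv j⟩

/-- The multihomogeneous vanishing ideal of a subset of multiprojective space. -/
def MPideal (X : Set (PStack m)) : Ideal (MvPolynomial ((j : J) × Fin (m j + 1)) ℂ) where
  carrier := {f | ∀ x ∈ X, PolyVanish f x}
  zero_mem' := fun x _ v _ => map_zero _
  add_mem' := fun {f g} hf hg x hx v hv => by rw [map_add, hf x hx v hv, hg x hx v hv, add_zero]
  smul_mem' := fun c f hf x hx v hv => by rw [smul_eq_mul, map_mul, hf x hx v hv, mul_zero]

theorem MP_mem_ideal (X : Set (PStack m)) (f : MvPolynomial ((j : J) × Fin (m j + 1)) ℂ) :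
    f ∈ MPideal X ↔ ∀ x ∈ X, PolyVanish f x := Iff.rfl

/-- A product vanishes at a point of multiprojective space only if a factor does.  The subtlety is
that vanishing is tested on all representatives at once; restricted to the torus orbit of one
representative, the two factors are polynomials in the scaling parameters. -/
theorem MP_vanish_mul [Fintype J] (f g : MvPolynomial ((j : J) × Fin (m j + 1)) ℂ) (w : PStack m)
    (h : PolyVanish (f * g) w) : PolyVanish f w ∨ PolyVanish g w := by
  obtain ⟨v, hv⟩ := MP_exists_rep w
  let T (f : MvPolynomial ((j : J) × Fin (m j + 1)) ℂ) : MvPolynomial J ℂ :=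
    MvPolynomial.aeval (fun p => MvPolynomial.C (v p.1 p.2) * MvPolynomial.X p.1) f
  have hT : ∀ f c, MvPolynomial.eval c (T f) =
      MvPolynomial.eval (fun p => c p.1 * v p.1 p.2) f := by
    intro f c
    simp only [T]
    rw [← MvPolynomial.aeval_eq_eval, ← MvPolynomial.aeval_eq_eval, ← AlgHom.comp_apply,
      MvPolynomial.comp_aeval]
    congr 2
    funext p
    simp [mul_comm]
  have key : ∀ f, T f = 0 → PolyVanish f w := by
    intro f hf u hu
    obtain ⟨c, -, rfl⟩ := hv.unique hu
    have := hT f c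
    rw [hf, map_zero] at this
    exact this.symm
  have h0 : T f * T g * ∏ j, MvPolynomial.X j = 0 := by
    refine MvPolynomial.funext fun c => ?_
    rw [map_mul, map_mul, map_zero, hT, hT, map_prod]
    by_cases hc : ∀ j, c j ≠ 0
    · have := h _ (hv.smul c hc)
      rw [map_mul] at this
      rw [this, zero_mul]
    · push Not at hc
      obtain ⟨j, hj⟩ := hc
      rw [Finset.prod_eq_zero (Finset.mem_univ j) (by simpa using hj), mul_zero]
  rcases mul_eq_zero.mp h0 with h1 | h1
  · exact (mul_eq_zero.mp h1).imp (key f) (key g)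
  · exact absurd h1 (Finset.prod_ne_zero_iff.mpr fun j _ => MvPolynomial.X_ne_zero j)

theorem MP_ideal_prime [Fintype J] (X : Set (PStack m)) (hX : IsIrredVariety X) :
    (MPideal X).IsPrime := by
  obtain ⟨-, ⟨w, hw⟩, hirr⟩ := hX
  refine ⟨fun h => ?_, fun {f g} hfg => ?_⟩
  · obtain ⟨v, hv⟩ := MP_exists_rep w
    have h1 : (1 : MvPolynomial ((j : J) × Fin (m j + 1)) ℂ) ∈ MPideal X := by
      rw [h]; trivial
    have := h1 w hw v hv
    simp at this
  · refine (hirr {x | PolyVanish f x} {x | PolyVanish g x} ⟨{f}, by simp⟩ ⟨{g}, by simp⟩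
      fun x hx => MP_vanish_mul f g x (hfg x hx)).imp (fun h x hx => h hx) (fun h x hx => h hx)

/-- Vanishing ideals are stable under rescaling the coordinates of each factor. -/
theorem MP_ideal_scale (X : Set (PStack m)) (f : MvPolynomial ((j : J) × Fin (m j + 1)) ℂ)
    (hf : f ∈ MPideal X) (c : J → ℂ) (hc : ∀ j, c j ≠ 0) :
    MvPolynomial.aeval (fun p => MvPolynomial.C (c p.1) * MvPolynomial.X p) f ∈ MPideal X := by
  intro x hx v hv
  rw [← hf x hx _ (MPRep.smul hv c hc), ← MvPolynomial.aeval_eq_eval, ← MvPolynomial.aeval_eq_eval,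
    ← AlgHom.comp_apply, MvPolynomial.comp_aeval]
  congr 2
  funext p
  simp

/-- The coordinate functions of `X` in its multihomogeneous coordinate ring. -/
noncomputable def MPcoord (X : Set (PStack m)) (j : J) (a : Fin (m j + 1)) :
    MvPolynomial ((j : J) × Fin (m j + 1)) ℂ ⧸ MPideal X :=
  Ideal.Quotient.mk _ (MvPolynomial.X ⟨j, a⟩)

theorem MP_aeval_coord (X : Set (PStack m)) (g : MvPolynomial ((j : J) × Fin (m j + 1)) ℂ) :
    MvPolynomial.aeval (fun p => MPcoord X p.1 p.2) g = Ideal.Quotient.mk (MPideal X) g := by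
  have : (MvPolynomial.aeval (fun p : (j : J) × Fin (m j + 1) => MPcoord X p.1 p.2)) =
      Ideal.Quotient.mkₐ ℂ (MPideal X) := by
    ext p
    simp [MPcoord]
  rw [this]; rfl

theorem MP_coord_ne (X : Set (PStack m)) (hX : X.Nonempty) (j : J) : ∃ a, MPcoord X j a ≠ 0 := by
  obtain ⟨w, hw⟩ := hX
  obtain ⟨v, hv⟩ := MP_exists_rep w
  obtain ⟨h1, -⟩ := hv j
  obtain ⟨a, ha⟩ := Function.ne_iff.mp h1
  refine ⟨a, fun h => ha ?_⟩
  have := (Ideal.Quotient.eq_zero_iff_mem.mp h) w hw v hv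
  simpa using this

/-- The coordinates of an irreducible variety form a generic point with values in its
multihomogeneous coordinate ring. -/
theorem MP_gen_self [Fintype J] (X : Set (PStack m)) (hX : IsIrredVariety X)
    (φ : ∀ j, Fin (m j + 1)) (hφ : ∀ j, MPcoord X j (φ j) ≠ 0) :
    MPGen X (MPcoord X) (∏ j, MPcoord X j (φ j)) where
  h0 := by
    have := MP_ideal_prime X hX
    exact Finset.prod_ne_zero_iff.mpr fun j _ => hφ j
  pt := by
    intro p hp
    rw [map_prod, Finset.prod_ne_zero_iff] at hp
    have hne : ∀ j, (fun a => p (MPcoord X j a)) ≠ 0 := fun j h =>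
      hp j (Finset.mem_univ j) (congrFun h (φ j))
    let w : PStack m := fun j => Projectivization.mk ℂ _ (hne j)
    have hw : MPRep (fun j a => p (MPcoord X j a)) w := fun j => ⟨hne j, rfl⟩
    refine ⟨w, ?_, hw⟩
    obtain ⟨F, hF⟩ := hX.1
    have hFI : ∀ f ∈ F, f ∈ MPideal X := by
      intro f hf x hx
      rw [hF] at hx
      exact hx f hf
    have hp0 : ∀ g ∈ MPideal X, MvPolynomial.eval (fun q => p (MPcoord X q.1 q.2)) g = 0 := by
      intro g hg
      rw [← MvPolynomial.aeval_eq_eval, ← MvPolynomial.comp_aeval, AlgHom.comp_apply,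
        MP_aeval_coord, Ideal.Quotient.eq_zero_iff_mem.mpr hg, map_zero]
    rw [hF]
    intro f hf v hv
    obtain ⟨c, hc, rfl⟩ := hw.unique hv
    rw [← hp0 _ (MP_ideal_scale X f (hFI f hf) c hc), ← MvPolynomial.aeval_eq_eval,
      ← MvPolynomial.aeval_eq_eval, ← AlgHom.comp_apply, MvPolynomial.comp_aeval]
    congr 2
    funext q
    simp
  van := by
    intro g hg
    rw [MP_aeval_coord, Ideal.Quotient.eq_zero_iff_mem] at hg
    exact hg

/-- A generic point of `X` projects to a generic point of `π_I(X)`. -/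
theorem MP_gen_res [DecidableEq J] {X : Set (PStack m)} {R : Type*} [CommRing R] [Algebra ℂ R]
    {ξ : ∀ j, Fin (m j + 1) → R} {h : R} (hX : MPGen X ξ h) (I : Finset J) :
    MPGen (resMap I '' X) (fun j : {j // j ∈ I} => ξ j.1) h where
  h0 := hX.h0
  pt := by
    intro p hp
    obtain ⟨w, hw, hv⟩ := hX.pt p hp
    exact ⟨_, ⟨w, hw, rfl⟩, fun j => hv j.1⟩
  van := by
    rintro g hg _ ⟨w, hw, rfl⟩ v hv
    let ι' : ((j : {j // j ∈ I}) × Fin (m j.1 + 1)) → ((j : J) × Fin (m j + 1)) :=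
      fun p => ⟨p.1.1, p.2⟩
    obtain ⟨u, hu⟩ := MP_exists_rep w
    let v' : ∀ j, Fin (m j + 1) → ℂ := fun j => if hj : j ∈ I then v ⟨j, hj⟩ else u j
    have hv' : MPRep v' w := by
      intro j
      by_cases hj : j ∈ I
      · simp only [v', hj, dif_pos]
        exact hv ⟨j, hj⟩
      · simp only [v', hj, dif_neg, not_false_eq_true]
        exact hu j
    have h1 := hX.van (MvPolynomial.rename ι' g) (by
      rw [MvPolynomial.aeval_rename]; exact hg) w hw v' hv'
    rw [MvPolynomial.eval_rename] at h1
    rw [← h1]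
    congr 2
    funext p
    simp [v', ι', p.1.2]

theorem MPdim_res [Fintype J] [DecidableEq J] {K : Type*} [Field K] [Algebra ℂ K] [DecidableEq K]
    (x : ∀ j, Fin (m j + 1) → K) (φ : ∀ j, Fin (m j + 1)) (I : Finset J) :
    MPdim (fun j : {j // j ∈ I} => x j.1) (fun j => φ j.1) Finset.univ = MPdim x φ I := by
  unfold MPdim
  congr 1
  ext y
  rw [MP_mem_T, MP_mem_T]
  simp [MPt]

end

/-- Castillo–Li–Zhang. For an irreducible multiprojective variety
`X`, a vector `e ∈ [n]` lies in `Dim(X)` iff `|e| = dim X` and for every proper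
subset `I` of the factors, `∑_{i ∈ I} e i ≤ dim π_I(X)`. -/
theorem mdim_mem_iff {ι : Type*} [Fintype ι] [DecidableEq ι] {n : ι → ℕ}
    (X : Set (PStack n)) (hX : IsIrredVariety X) (e : ι → ℕ) :
    e ∈ MDim X ↔
      ((∀ i, e i ≤ n i) ∧ (∑ i, e i = dimOf X) ∧
        ∀ I : Finset ι, I ≠ Finset.univ → ∑ i ∈ I, e i ≤ dimProj I X) := by
  classical
  have hprime := MP_ideal_prime X hX
  choose φ hφ using MP_coord_ne X hX.2.1
  let R := MvPolynomial ((i : ι) × Fin (n i + 1)) ℂ ⧸ MPideal X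
  let K := FractionRing R
  have hgen := MP_gen_self X hX φ hφ
  have hφK : ∀ i, algebraMap R K (MPcoord X i (φ i)) ≠ 0 := fun i =>
    (FaithfulSMul.algebraMap_eq_zero_iff R K).not.mpr (hφ i)
  have hdim := MP_dimOf (K := K) hgen hφK
  have hproj : ∀ I : Finset ι, dimProj I X =
      MPdim (fun i a => algebraMap R K (MPcoord X i a)) φ I := fun I => by
    rw [← MPdim_res]
    exact MP_dimOf (K := K) (MP_gen_res hgen I) (φ := fun i : {i // i ∈ I} => φ i.1)
      fun i => hφK i.1
  have hmem := MP_mdim (K := K) hgen hφK e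
  constructor
  · intro he
    obtain ⟨h1, h2⟩ := hmem.mp he
    exact ⟨he.1, by rw [h1, hdim], fun I _ => by rw [hproj]; exact h2 I⟩
  · rintro ⟨-, h1, h2⟩
    refine hmem.mpr ⟨by rw [h1, hdim], fun I => ?_⟩
    by_cases hI : I = Finset.univ
    · subst hI
      rw [h1, hdim]
    · rw [← hproj]
      exact h2 I hI
end
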